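/- arXiv:2107.01082 — 9 statements merged into one kernel-verified Lean document; each statement's English description precedes it below -/
import Mathlib

section
/- For every initial value d₀ ∈ [0, ω₀] and every admissible source y there exists a continuous function ω : [0,T] → ℝ with 0 ≤ ω(t) ≤ ω₁ for all t ∈ [0,T] that solves the damage integral equation, i.e. ω(t) = d₀ + ∫₀ᵗ (1 − ω(ξ))^{−α} y(ξ) dξ for all t ∈ [0,T]. -/
open MeasureTheory Set

/-- `y` is an admissible source: measurable, and `0 ≤ y ≤ T⁻¹(ω₁ − ω₀)(1 − ω₁)^α`
a.e. on `[0, T]`. -/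
def AdmissibleSource (T a w0 w1 : ℝ) (y : ℝ → ℝ) : Prop :=
  Measurable y ∧
    ∀ᵐ t ∂(volume.restrict (Icc (0 : ℝ) T)),
      0 ≤ y t ∧ y t ≤ T⁻¹ * (w1 - w0) * (1 - w1) ^ a

/-- `ω` is a continuous solution of the damage integral equation
`ω(t) = d₀ + ∫₀ᵗ (1 − ω(ξ))^(−α) y(ξ) dξ` on `[0, T]`, with values in `[0, ω₁]`. -/
def SolvesDamage (T a w1 d0 : ℝ) (y ω : ℝ → ℝ) : Prop :=
  ContinuousOn ω (Icc (0 : ℝ) T) ∧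
  (∀ t ∈ Icc (0 : ℝ) T, ω t ∈ Icc (0 : ℝ) w1) ∧
  (∀ t ∈ Icc (0 : ℝ) T, ω t = d0 + ∫ ξ in (0 : ℝ)..t, (1 - ω ξ) ^ (-a) * y ξ)

/-!
The damage equation is the separable equation `(1 - ω) ^ a * ω' = y`. Its solution is `φ ∘ Y`,
where `Y` is the primitive of `y` and `φ` is the inverse of the primitive `H` of `(1 - u) ^ a`
starting at `d0`: since `Y` is absolutely continuous and `φ` is `C¹`, the chain rule
`(φ ∘ Y)' = φ' (Y) * y` holds almost everywhere and integrates to the damage equation. The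
solution stays below `w1` as long as `Y T ≤ H w1`, and the bound on admissible sources guarantees
`Y T ≤ (w1 - d0) * (1 - w1) ^ a ≤ H w1`.
-/

open Filter

theorem absolutelyContinuousOnInterval_comp_of_lipschitzOnWith {X Z : Type*}
    [PseudoMetricSpace X] [PseudoMetricSpace Z] {φ : X → Z} {f : ℝ → X} {a b : ℝ} {K : NNReal}
    (hφ : LipschitzOnWith K φ (f '' uIcc a b)) (hf : AbsolutelyContinuousOnInterval f a b) :
    AbsolutelyContinuousOnInterval (φ ∘ f) a b := by
  refine squeeze_zero' (.of_forall fun E ↦ Finset.sum_nonneg fun i _ ↦ dist_nonneg)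
    (eventually_inf_principal.2 <| .of_forall fun E hE ↦ ?_)
    (by simpa only [mul_zero] using Tendsto.const_mul (K : ℝ) hf)
  rw [Finset.mul_sum]
  exact Finset.sum_le_sum fun i hi ↦ hφ.dist_le_mul
    _ (mem_image_of_mem f (hE.1 i hi).1) _ (mem_image_of_mem f (hE.1 i hi).2)

theorem absolutelyContinuousOnInterval_comp_of_contDiff {E F : Type*} [NormedAddCommGroup E]
    [NormedSpace ℝ E] [NormedAddCommGroup F] [NormedSpace ℝ F] {φ : E → F} {f : ℝ → E} {a b : ℝ}
    (hφ : ContDiff ℝ 1 φ) (hf : AbsolutelyContinuousOnInterval f a b) :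
    AbsolutelyContinuousOnInterval (φ ∘ f) a b := by
  obtain ⟨K, hK⟩ := hφ.locallyLipschitz.locallyLipschitzOn.exists_lipschitzOnWith_of_compact
    (isCompact_uIcc.image_of_continuousOn hf.continuousOn)
  exact absolutelyContinuousOnInterval_comp_of_lipschitzOnWith hK hf

theorem integral_comp_mul_deriv_of_absolutelyContinuousOnInterval {φ φ' f f' : ℝ → ℝ} {a b : ℝ}
    (hφ : ∀ s, HasDerivAt φ (φ' s) s) (hφ' : Continuous φ')
    (hf : AbsolutelyContinuousOnInterval f a b)
    (hf' : ∀ᵐ x, x ∈ uIcc a b → HasDerivAt f (f' x) x) :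
    ∫ x in a..b, φ' (f x) * f' x = φ (f b) - φ (f a) := by
  have hφ_deriv : deriv φ = φ' := funext fun s ↦ (hφ s).deriv
  have hφ_contDiff : ContDiff ℝ 1 φ :=
    contDiff_one_iff_deriv.2 ⟨fun s ↦ (hφ s).differentiableAt, hφ_deriv ▸ hφ'⟩
  calc ∫ x in a..b, φ' (f x) * f' x = ∫ x in a..b, deriv (φ ∘ f) x := by
        refine intervalIntegral.integral_congr_ae ?_
        filter_upwards [hf'] with x hx hxab
        exact ((hφ (f x)).comp x (hx (uIoc_subset_uIcc hxab))).deriv.symm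
    _ = φ (f b) - φ (f a) :=
        (absolutelyContinuousOnInterval_comp_of_contDiff hφ_contDiff hf).integral_deriv_eq_sub

theorem integral_comp_primitive_mul {φ φ' y : ℝ → ℝ} {a b : ℝ}
    (hφ : ∀ s, HasDerivAt φ (φ' s) s) (hφ' : Continuous φ')
    (hy : IntervalIntegrable y volume a b) :
    ∫ x in a..b, φ' (∫ ξ in a..x, y ξ) * y x = φ (∫ ξ in a..b, y ξ) - φ 0 := by
  have hprimitive_deriv :
      ∀ᵐ x, x ∈ uIcc a b → HasDerivAt (fun t ↦ ∫ ξ in a..t, y ξ) (y x) x :=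
    hy.ae_hasDerivAt_integral.mono fun x hx hxab ↦ hx hxab a left_mem_uIcc
  rw [integral_comp_mul_deriv_of_absolutelyContinuousOnInterval hφ hφ'
    (hy.absolutelyContinuousOnInterval_intervalIntegral left_mem_uIcc) hprimitive_deriv,
    intervalIntegral.integral_same]

theorem monotoneOn_integral_of_ae_nonneg {y : ℝ → ℝ} {μ : Measure ℝ} {a b : ℝ}
    (hy : IntervalIntegrable y μ a b) (hy_nonneg : ∀ᵐ t ∂(μ.restrict (Ioc a b)), 0 ≤ y t) :
    MonotoneOn (fun t ↦ ∫ ξ in a..t, y ξ ∂μ) (Icc a b) := by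
  intro s hs t ht hst
  have hsub : Ioc a t ⊆ Ioc a b := Ioc_subset_Ioc_right ht.2
  exact intervalIntegral.integral_mono_interval le_rfl hs.1 hst
    (ae_restrict_of_ae_restrict_of_subset hsub hy_nonneg)
    (hy.mono_set (uIcc_subset_uIcc_left (Icc_subset_uIcc ht)))

theorem surjective_of_pos_le_deriv {f : ℝ → ℝ} {m : ℝ} (hm : 0 < m) (hf : Differentiable ℝ f)
    (hf' : ∀ x, m ≤ deriv f x) : Function.Surjective f := by
  have hgrowth {x y : ℝ} (hxy : x ≤ y) : m * (y - x) ≤ f y - f x :=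
    mul_sub_le_image_sub_of_le_deriv hf hf' hxy
  have hline_top : Tendsto (fun x ↦ m * x + f 0) atTop atTop :=
    tendsto_atTop_add_const_right _ _ (tendsto_id.const_mul_atTop hm)
  have hline_bot : Tendsto (fun x ↦ m * x + f 0) atBot atBot :=
    tendsto_atBot_add_const_right _ _ (tendsto_id.const_mul_atBot hm)
  refine hf.continuous.surjective (tendsto_atTop_mono' _ ?_ hline_top)
    (tendsto_atBot_mono' _ ?_ hline_bot)
  · filter_upwards [eventually_ge_atTop 0] with x hx
    linarith [hgrowth hx]
  · filter_upwards [eventually_le_atBot 0] with x hx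
    linarith [hgrowth hx]

theorem exists_orderIso_hasDerivAt_symm_of_pos_le_deriv {f f' : ℝ → ℝ} {m : ℝ} (hm : 0 < m)
    (hf : ∀ x, HasDerivAt f (f' x) x) (hf' : ∀ x, m ≤ f' x) :
    ∃ e : ℝ ≃o ℝ, ⇑e = f ∧ ∀ s, HasDerivAt e.symm (f' (e.symm s))⁻¹ s := by
  have hderiv : ∀ x, m ≤ deriv f x := fun x ↦ (hf x).deriv ▸ hf' x
  have hmono : StrictMono f := strictMono_of_deriv_pos fun x ↦ hm.trans_le (hderiv x)
  let e : ℝ ≃o ℝ := hmono.orderIsoOfSurjective f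
    (surjective_of_pos_le_deriv hm (fun x ↦ (hf x).differentiableAt) hderiv)
  exact ⟨e, rfl, fun s ↦ (hf (e.symm s)).of_local_left_inverse e.symm.continuous.continuousAt
    (hm.trans_le (hf' _)).ne' (.of_forall e.apply_symm_apply)⟩

theorem exists_continuous_eqOn_Icc_pos_le {h : ℝ → ℝ} {c d : ℝ} (hcd : c ≤ d)
    (hh : ContinuousOn h (Icc c d)) (hpos : ∀ u ∈ Icc c d, 0 < h u) :
    ∃ k : ℝ → ℝ, ∃ m > 0, Continuous k ∧ EqOn k h (Icc c d) ∧ ∀ u, m ≤ k u := by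
  obtain ⟨u₀, hu₀, hmin⟩ := isCompact_Icc.exists_isMinOn (nonempty_Icc.2 hcd) hh
  exact ⟨IccExtend hcd ((Icc c d).domRestrict h), h u₀, hpos u₀ hu₀, hh.domRestrict.Icc_extend',
    fun u hu ↦ IccExtend_of_mem hcd _ hu, fun u ↦ hmin (projIcc c d hcd u).2⟩

theorem exists_orderIso_hasDerivAt_symm_eqOn_primitive {h : ℝ → ℝ} {c d : ℝ} (hcd : c ≤ d)
    (hh : ContinuousOn h (Icc c d)) (hpos : ∀ u ∈ Icc c d, 0 < h u) :
    ∃ (e : ℝ ≃o ℝ) (k : ℝ → ℝ), Continuous k ∧ (∀ u, k u ≠ 0) ∧ EqOn k h (Icc c d) ∧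
      (∀ x ∈ Icc c d, e x = ∫ u in c..x, h u) ∧ ∀ s, HasDerivAt e.symm (k (e.symm s))⁻¹ s := by
  -- Extending `h` beyond `[c, d]` makes the inverse differentiable from both sides at the images
  -- of `c` and `d`, where the primitive of `y` may rest for a positive time.
  obtain ⟨k, m, hm, hk, hkh, hmk⟩ := exists_continuous_eqOn_Icc_pos_le hcd hh hpos
  obtain ⟨e, he, he_symm⟩ := exists_orderIso_hasDerivAt_symm_of_pos_le_deriv hm
    (fun x ↦ intervalIntegral.integral_hasDerivAt_right (hk.intervalIntegrable c x)
      (hk.stronglyMeasurableAtFilter _ _) hk.continuousAt) hmk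
  refine ⟨e, k, hk, fun u ↦ (hm.trans_le (hmk u)).ne', hkh, fun x hx ↦ ?_, he_symm⟩
  rw [he]
  refine intervalIntegral.integral_congr fun u hu ↦ hkh ?_
  rw [uIcc_of_le hx.1] at hu
  exact ⟨hu.1, hu.2.trans hx.2⟩

theorem exists_solution_of_separable {h y : ℝ → ℝ} {t₀ T c d : ℝ} (hT : t₀ ≤ T) (hcd : c ≤ d)
    (hh : ContinuousOn h (Icc c d)) (hpos : ∀ u ∈ Icc c d, 0 < h u)
    (hy : IntervalIntegrable y volume t₀ T)
    (hy_nonneg : ∀ᵐ t ∂(volume.restrict (Icc t₀ T)), 0 ≤ y t)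
    (hyh : ∫ t in t₀..T, y t ≤ ∫ u in c..d, h u) :
    ∃ ω : ℝ → ℝ, ContinuousOn ω (Icc t₀ T) ∧ MapsTo ω (Icc t₀ T) (Icc c d) ∧
      ∀ t ∈ Icc t₀ T, ω t = c + ∫ ξ in t₀..t, (h (ω ξ))⁻¹ * y ξ := by
  obtain ⟨e, k, hk, hk_ne, hkh, heh, he_symm⟩ :=
    exists_orderIso_hasDerivAt_symm_eqOn_primitive hcd hh hpos
  have he_left : e.symm 0 = c := by
    rw [e.symm_apply_eq, heh c (left_mem_Icc.2 hcd), intervalIntegral.integral_same]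
  let Y : ℝ → ℝ := fun t ↦ ∫ ξ in t₀..t, y ξ
  have hY_left : Y t₀ = 0 := intervalIntegral.integral_same
  have hY_cont : ContinuousOn Y (Icc t₀ T) := by
    rw [← uIcc_of_le hT]
    exact intervalIntegral.continuousOn_primitive_interval' hy left_mem_uIcc
  have hY_mono : MonotoneOn Y (Icc t₀ T) := monotoneOn_integral_of_ae_nonneg hy
    (ae_restrict_of_ae_restrict_of_subset Ioc_subset_Icc_self hy_nonneg)
  have hmaps : MapsTo (e.symm ∘ Y) (Icc t₀ T) (Icc c d) := by
    refine fun t ht ↦ ⟨?_, ?_⟩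
    · rw [← he_left, ← hY_left]
      exact e.symm.monotone (hY_mono (left_mem_Icc.2 hT) ht ht.1)
    · rw [Function.comp_apply, e.symm_apply_le, heh d (right_mem_Icc.2 hcd)]
      exact (hY_mono ht (right_mem_Icc.2 hT) ht.2).trans hyh
  refine ⟨e.symm ∘ Y, e.symm.continuous.comp_continuousOn hY_cont, hmaps, fun t ht ↦ ?_⟩
  have hsub : uIcc t₀ t ⊆ uIcc t₀ T := uIcc_subset_uIcc_left (Icc_subset_uIcc ht)
  calc e.symm (Y t) = c + ∫ ξ in t₀..t, (k (e.symm (Y ξ)))⁻¹ * y ξ := by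
        rw [integral_comp_primitive_mul he_symm
          ((hk.comp e.symm.continuous).inv₀ fun s ↦ hk_ne _) (hy.mono_set hsub), he_left,
          add_sub_cancel]
    _ = c + ∫ ξ in t₀..t, (h (e.symm (Y ξ)))⁻¹ * y ξ := by
        congr 1
        refine intervalIntegral.integral_congr fun ξ hξ ↦ ?_
        have hξT : ξ ∈ Icc t₀ T := uIcc_of_le hT ▸ hsub hξ
        exact congrArg (·⁻¹ * y ξ) (hkh (hmaps hξT))

theorem sub_mul_le_integral_of_antitoneOn {h : ℝ → ℝ} {c d : ℝ} (hcd : c ≤ d)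
    (hh : AntitoneOn h (Icc c d)) : (d - c) * h d ≤ ∫ u in c..d, h u :=
  calc (d - c) * h d = ∫ _ in c..d, h d := by rw [intervalIntegral.integral_const, smul_eq_mul]
    _ ≤ ∫ u in c..d, h u :=
        intervalIntegral.integral_mono_on hcd intervalIntegrable_const
          (uIcc_of_le hcd ▸ hh).intervalIntegrable
          fun _ hu ↦ hh hu (right_mem_Icc.2 hcd) hu.2

theorem antitoneOn_one_sub_rpow {a : ℝ} (ha : 0 ≤ a) :
    AntitoneOn (fun u : ℝ ↦ (1 - u) ^ a) (Iic 1) :=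
  fun _ _ _ hv huv ↦ Real.rpow_le_rpow (sub_nonneg.2 hv) (sub_le_sub_left huv 1) ha

namespace AdmissibleSource

variable {T a w0 w1 : ℝ} {y : ℝ → ℝ}

theorem ae_nonneg (hy : AdmissibleSource T a w0 w1 y) :
    ∀ᵐ t ∂(volume.restrict (Icc (0 : ℝ) T)), 0 ≤ y t :=
  hy.2.mono fun _ ht ↦ ht.1

theorem intervalIntegrable (hy : AdmissibleSource T a w0 w1 y) (hT : 0 ≤ T) :
    IntervalIntegrable y volume 0 T :=
  (intervalIntegrable_iff_integrableOn_Icc_of_le hT).2 <|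
    Measure.integrableOn_of_bounded measure_Icc_lt_top.ne hy.1.aestronglyMeasurable
      (hy.2.mono fun _ ht ↦ (Real.norm_of_nonneg ht.1).trans_le ht.2)

theorem integral_le (hy : AdmissibleSource T a w0 w1 y) (hT : 0 < T) :
    ∫ t in (0 : ℝ)..T, y t ≤ (w1 - w0) * (1 - w1) ^ a :=
  calc ∫ t in (0 : ℝ)..T, y t ≤ ∫ _ in (0 : ℝ)..T, T⁻¹ * (w1 - w0) * (1 - w1) ^ a :=
        intervalIntegral.integral_mono_ae_restrict hT.le (hy.intervalIntegrable hT.le)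
          intervalIntegrable_const (hy.2.mono fun _ ht ↦ ht.2)
    _ = (w1 - w0) * (1 - w1) ^ a := by
        rw [intervalIntegral.integral_const, smul_eq_mul, sub_zero, mul_assoc,
          mul_inv_cancel_left₀ hT.ne']

theorem integral_le_integral_one_sub_rpow {d0 : ℝ} (hy : AdmissibleSource T a w0 w1 y)
    (hT : 0 < T) (ha : 0 ≤ a) (hd0 : d0 ≤ w0) (hw01 : w0 ≤ w1) (hw1 : w1 ≤ 1) :
    ∫ t in (0 : ℝ)..T, y t ≤ ∫ u in d0..w1, (1 - u) ^ a :=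
  calc ∫ t in (0 : ℝ)..T, y t ≤ (w1 - w0) * (1 - w1) ^ a := hy.integral_le hT
    _ ≤ (w1 - d0) * (1 - w1) ^ a :=
        mul_le_mul_of_nonneg_right (sub_le_sub_left hd0 w1) (Real.rpow_nonneg (sub_nonneg.2 hw1) a)
    _ ≤ ∫ u in d0..w1, (1 - u) ^ a :=
        sub_mul_le_integral_of_antitoneOn (hd0.trans hw01)
          ((antitoneOn_one_sub_rpow ha).mono fun _ hu ↦ hu.2.trans hw1)

end AdmissibleSource

theorem damage_integral_equation_existence_general {T a w1 d0 : ℝ} {y : ℝ → ℝ} (hT : 0 ≤ T)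
    (hd0 : 0 ≤ d0) (hd01 : d0 ≤ w1) (hw1 : w1 < 1) (hy : IntervalIntegrable y volume 0 T)
    (hy_nonneg : ∀ᵐ t ∂(volume.restrict (Icc (0 : ℝ) T)), 0 ≤ y t)
    (hy_le : ∫ t in (0 : ℝ)..T, y t ≤ ∫ u in d0..w1, (1 - u) ^ a) :
    ∃ ω : ℝ → ℝ, SolvesDamage T a w1 d0 y ω := by
  have hpos : ∀ u ≤ w1, 0 < 1 - u := fun u hu ↦ sub_pos.2 (hu.trans_lt hw1)
  have hcont : ContinuousOn (fun u : ℝ ↦ (1 - u) ^ a) (Icc d0 w1) :=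
    (continuousOn_const.sub continuousOn_id).rpow_const fun u hu ↦ Or.inl (hpos u hu.2).ne'
  obtain ⟨ω, hω_cont, hω_maps, hω⟩ := exists_solution_of_separable hT hd01 hcont
    (fun u hu ↦ Real.rpow_pos_of_pos (hpos u hu.2) a) hy hy_nonneg hy_le
  refine ⟨ω, hω_cont, fun t ht ↦ Icc_subset_Icc_left hd0 (hω_maps ht), fun t ht ↦ ?_⟩
  rw [hω t ht]
  congr 1
  refine intervalIntegral.integral_congr fun ξ hξ ↦ ?_
  have hξT : ξ ∈ Icc 0 T := Icc_subset_Icc_right ht.2 (uIcc_of_le ht.1 ▸ hξ)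
  simp only [Real.rpow_neg (hpos _ (hω_maps hξT).2).le]

/-- Existence of a solution to the damage integral equation. -/
theorem damage_integral_equation_existence
    (T a w0 w1 : ℝ) (hT : 0 < T) (ha : 1 ≤ a)
    (hw0 : 0 ≤ w0) (hw01 : w0 ≤ w1) (hw1 : w1 < 1)
    (d0 : ℝ) (hd0 : d0 ∈ Icc (0 : ℝ) w0)
    (y : ℝ → ℝ) (hy : AdmissibleSource T a w0 w1 y) :
    ∃ ω : ℝ → ℝ, SolvesDamage T a w1 d0 y ω :=
  damage_integral_equation_existence_general hT.le hd0.1 (hd0.2.trans hw01) hw1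
    (hy.intervalIntegrable hT.le) hy.ae_nonneg
    (hy.integral_le_integral_one_sub_rpow hT (zero_le_one.trans ha) hd0.2 hw01 hw1.le)
end

section
/- If ω₁ and ω₂ are two continuous functions [0,T] → ℝ that both solve the damage integral equation with the same initial value d₀ ∈ [0, ω₀] and the same admissible source y, then ω₁(t) = ω₂(t) for all t ∈ [0,T]. -/
open MeasureTheory Set

/-!
For `x ≤ ω₁ < 1` the nonlinearity `x ↦ (1 - x) ^ (-α)` is Lipschitz, so the distance `φ` between two
solutions satisfies `φ t ≤ ∫₀ᵗ k φ` with `k` a multiple of `|y|`. If `F` denotes the right-hand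
side, then `φ ≤ F` and `F` is nondecreasing, whence `F t - F s ≤ (∫ₛᵗ k) * F t`. Once `F s = 0`,
this forces `F t = 0` as long as `∫ₛᵗ k < 1`; since `∫ₛᵗ k → 0` as `t → s`, the zero set of `F`
cannot stop before the end of the interval.
-/

open scoped Topology

-- The increment hypothesis is `dF ≤ F dP` in integrated form.
theorem eqOn_zero_of_sub_le_sub_mul {a b : ℝ} {F P : ℝ → ℝ}
    (hF : ContinuousOn F (Icc a b)) (hP : ContinuousOn P (Icc a b))
    (hF_nonneg : ∀ t ∈ Icc a b, 0 ≤ F t) (hFa : F a = 0)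
    (hFP : ∀ s ∈ Icc a b, ∀ t ∈ Icc a b, s ≤ t → F t - F s ≤ (P t - P s) * F t) :
    EqOn F 0 (Icc a b) := by
  have isClosed_zeros : IsClosed ({t | F t = 0} ∩ Icc a b) := by
    rw [inter_comm]
    exact hF.preimage_isClosed_of_isClosed isClosed_Icc isClosed_singleton
  refine isClosed_zeros.Icc_subset_of_forall_exists_gt hFa fun s ⟨hFs, hs⟩ r hr ↦ ?_
  have hsI : s ∈ Icc a b := Ico_subset_Icc_self hs
  have hP_lt : ∀ᶠ t in 𝓝[>] s, P t < P s + 1 :=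
    ((hP s hsI).mono_of_mem_nhdsWithin (Icc_mem_nhdsGT_of_mem hs)).eventually_lt_const
      (lt_add_one _)
  have ht_mem : ∀ᶠ t in 𝓝[>] s, t ∈ Ioc s r ∩ Ioc s b :=
    Filter.inter_mem (Ioc_mem_nhdsGT hr) (Ioc_mem_nhdsGT hs.2)
  obtain ⟨t, hPt, htr, htb⟩ := (hP_lt.and ht_mem).exists
  have htI : t ∈ Icc a b := ⟨hs.1.trans htb.1.le, htb.2⟩
  have hFt : F t ≤ (P t - P s) * F t := by
    simpa only [hFs.out, sub_zero] using hFP s hsI t htI htb.1.le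
  refine ⟨t, ?_, htr⟩
  change F t = 0
  nlinarith [hF_nonneg t htI]

section Primitive

variable {E : Type*} [NormedAddCommGroup E] {μ : Measure ℝ} {a b s t : ℝ}

theorem intervalIntegrable_of_integrableOn_Icc {f : ℝ → E} (hf : IntegrableOn f (Icc a b) μ)
    (hs : s ∈ Icc a b) (ht : t ∈ Icc a b) : IntervalIntegrable f μ s t :=
  (hf.mono_set (uIcc_subset_Icc hs ht)).intervalIntegrable

theorem monotoneOn_integral_of_nonneg {f : ℝ → ℝ} (hf : IntegrableOn f (Icc a b) μ)
    (hf_nonneg : 0 ≤ᵐ[μ.restrict (Icc a b)] f) :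
    MonotoneOn (fun t ↦ ∫ r in a..t, f r ∂μ) (Icc a b) := by
  intro s hs t ht hst
  have hsub : Ioc a t ⊆ Icc a b := Ioc_subset_Icc_self.trans (Icc_subset_Icc_right ht.2)
  exact intervalIntegral.integral_mono_interval le_rfl hs.1 hst
    (ae_restrict_of_ae_restrict_of_subset hsub hf_nonneg)
    (intervalIntegrable_of_integrableOn_Icc hf (left_mem_Icc.2 (ht.1.trans ht.2)) ht)

variable [NormedSpace ℝ E]

theorem integral_sub_integral_of_integrableOn_Icc {f : ℝ → E} (hf : IntegrableOn f (Icc a b) μ)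
    (hs : s ∈ Icc a b) (ht : t ∈ Icc a b) :
    (∫ r in a..t, f r ∂μ) - ∫ r in a..s, f r ∂μ = ∫ r in s..t, f r ∂μ :=
  have ha : a ∈ Icc a b := left_mem_Icc.2 (ht.1.trans ht.2)
  intervalIntegral.integral_interval_sub_left (intervalIntegrable_of_integrableOn_Icc hf ha ht)
    (intervalIntegrable_of_integrableOn_Icc hf ha hs)

theorem continuousOn_integral_of_integrableOn_Icc [NullSingletonClass μ] {f : ℝ → E}
    (hf : IntegrableOn f (Icc a b) μ) :
    ContinuousOn (fun t ↦ ∫ r in a..t, f r ∂μ) (Icc a b) := by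
  rcases le_or_gt a b with hab | hba
  · rw [← uIcc_of_le hab] at hf ⊢
    exact intervalIntegral.continuousOn_primitive_interval hf
  · simp only [Icc_eq_empty_of_lt hba, continuousOn_empty]

end Primitive

section Gronwall

variable {μ : Measure ℝ} {a b : ℝ}

theorem integral_mul_sub_le_of_le_integral_mul {k φ : ℝ → ℝ}
    (hk : IntegrableOn k (Icc a b) μ) (hkφ : IntegrableOn (fun t ↦ k t * φ t) (Icc a b) μ)
    (hk_nonneg : 0 ≤ᵐ[μ.restrict (Icc a b)] k)
    (hkφ_nonneg : 0 ≤ᵐ[μ.restrict (Icc a b)] fun t ↦ k t * φ t)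
    (hφ_le : ∀ t ∈ Icc a b, φ t ≤ ∫ r in a..t, k r * φ r ∂μ)
    {s t : ℝ} (hs : s ∈ Icc a b) (ht : t ∈ Icc a b) (hst : s ≤ t) :
    (∫ r in a..t, k r * φ r ∂μ) - ∫ r in a..s, k r * φ r ∂μ ≤
      ((∫ r in a..t, k r ∂μ) - ∫ r in a..s, k r ∂μ) * ∫ r in a..t, k r * φ r ∂μ := by
  have hsub : Icc s t ⊆ Icc a b := Icc_subset_Icc hs.1 ht.2
  rw [integral_sub_integral_of_integrableOn_Icc hkφ hs ht,
    integral_sub_integral_of_integrableOn_Icc hk hs ht, ← intervalIntegral.integral_mul_const]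
  refine intervalIntegral.integral_mono_ae_restrict hst
    (intervalIntegrable_of_integrableOn_Icc hkφ hs ht)
    ((intervalIntegrable_of_integrableOn_Icc hk hs ht).mul_const _) ?_
  filter_upwards [ae_restrict_of_ae_restrict_of_subset hsub hk_nonneg,
    ae_restrict_mem measurableSet_Icc] with r hkr hr
  have hφr : φ r ≤ ∫ r in a..t, k r * φ r ∂μ :=
    (hφ_le r (hsub hr)).trans (monotoneOn_integral_of_nonneg hkφ hkφ_nonneg (hsub hr) ht hr.2)
  exact mul_le_mul_of_nonneg_left hφr hkr

theorem eqOn_zero_of_le_integral_mul [NullSingletonClass μ] {k φ : ℝ → ℝ}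
    (hk : IntegrableOn k (Icc a b) μ) (hkφ : IntegrableOn (fun t ↦ k t * φ t) (Icc a b) μ)
    (hk_nonneg : 0 ≤ᵐ[μ.restrict (Icc a b)] k) (hφ_nonneg : ∀ t ∈ Icc a b, 0 ≤ φ t)
    (hφ_le : ∀ t ∈ Icc a b, φ t ≤ ∫ r in a..t, k r * φ r ∂μ) :
    EqOn φ 0 (Icc a b) := by
  have hkφ_nonneg : 0 ≤ᵐ[μ.restrict (Icc a b)] fun t ↦ k t * φ t := by
    filter_upwards [hk_nonneg, ae_restrict_mem measurableSet_Icc] with t hkt ht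
    exact mul_nonneg hkt (hφ_nonneg t ht)
  have integral_eq_zero : EqOn (fun t ↦ ∫ r in a..t, k r * φ r ∂μ) 0 (Icc a b) :=
    eqOn_zero_of_sub_le_sub_mul (continuousOn_integral_of_integrableOn_Icc hkφ)
      (continuousOn_integral_of_integrableOn_Icc hk)
      (fun t ht ↦ (hφ_nonneg t ht).trans (hφ_le t ht)) intervalIntegral.integral_same
      (fun _ hs _ ht hst ↦
        integral_mul_sub_le_of_le_integral_mul hk hkφ hk_nonneg hkφ_nonneg hφ_le hs ht hst)
  exact fun t ht ↦ ((hφ_le t ht).trans_eq (integral_eq_zero ht)).antisymm (hφ_nonneg t ht)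

theorem eqOn_of_integral_equation_of_lipschitz [NullSingletonClass μ] {E : Type*}
    [NormedAddCommGroup E] [NormedSpace ℝ E] {f : ℝ → E → E} {k : ℝ → ℝ} {U : Set E} {c : E}
    {u v : ℝ → E} (hk : IntegrableOn k (Icc a b) μ)
    (hf : ∀ᵐ t ∂μ.restrict (Icc a b), ∀ x ∈ U, ∀ z ∈ U, ‖f t x - f t z‖ ≤ k t * ‖x - z‖)
    (huU : MapsTo u (Icc a b) U) (hvU : MapsTo v (Icc a b) U)
    (hfu : IntegrableOn (fun t ↦ f t (u t)) (Icc a b) μ)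
    (hfv : IntegrableOn (fun t ↦ f t (v t)) (Icc a b) μ)
    (hu : ∀ t ∈ Icc a b, u t = c + ∫ r in a..t, f r (u r) ∂μ)
    (hv : ∀ t ∈ Icc a b, v t = c + ∫ r in a..t, f r (v r) ∂μ) :
    EqOn u v (Icc a b) := by
  have sub_eq_integral : ∀ t ∈ Icc a b, u t - v t = ∫ r in a..t, (f r (u r) - f r (v r)) ∂μ := by
    intro t ht
    have ha : a ∈ Icc a b := left_mem_Icc.2 (ht.1.trans ht.2)
    rw [hu t ht, hv t ht, add_sub_add_left_eq_sub,
      intervalIntegral.integral_sub (intervalIntegrable_of_integrableOn_Icc hfu ha ht)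
        (intervalIntegrable_of_integrableOn_Icc hfv ha ht)]
  have norm_sub_continuousOn : ContinuousOn (fun t ↦ ‖u t - v t‖) (Icc a b) :=
    ((continuousOn_integral_of_integrableOn_Icc (hfu.sub hfv)).congr sub_eq_integral).norm
  have abs_integrableOn : IntegrableOn (fun t ↦ |k t|) (Icc a b) μ := hk.abs
  have mul_norm_sub_integrableOn : IntegrableOn (fun t ↦ |k t| * ‖u t - v t‖) (Icc a b) μ :=
    abs_integrableOn.mul_continuousOn norm_sub_continuousOn isCompact_Icc
  have norm_sub_le : ∀ t ∈ Icc a b, ‖u t - v t‖ ≤ ∫ r in a..t, |k r| * ‖u r - v r‖ ∂μ := by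
    intro t ht
    rw [sub_eq_integral t ht]
    refine intervalIntegral.norm_integral_le_of_norm_le ht.1 ?_
      (intervalIntegrable_of_integrableOn_Icc mul_norm_sub_integrableOn
        (left_mem_Icc.2 (ht.1.trans ht.2)) ht)
    filter_upwards [(ae_restrict_iff' measurableSet_Icc).1 hf] with r hfr hr
    have hrI : r ∈ Icc a b := ⟨hr.1.le, hr.2.trans ht.2⟩
    exact (hfr hrI _ (huU hrI) _ (hvU hrI)).trans
      (mul_le_mul_of_nonneg_right (le_abs_self _) (norm_nonneg _))
  have norm_sub_eq_zero : EqOn (fun t ↦ ‖u t - v t‖) 0 (Icc a b) :=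
    eqOn_zero_of_le_integral_mul abs_integrableOn mul_norm_sub_integrableOn
      (.of_forall fun _ ↦ abs_nonneg _) (fun _ _ ↦ norm_nonneg _) norm_sub_le
  exact fun t ht ↦ sub_eq_zero.1 (norm_eq_zero.1 (norm_sub_eq_zero ht))

end Gronwall

section Damage

variable {T a w1 d0 : ℝ} {y : ℝ → ℝ}

theorem AdmissibleSource.integrableOn {w0 : ℝ} (hy : AdmissibleSource T a w0 w1 y) :
    IntegrableOn y (Icc 0 T) := by
  refine Measure.integrableOn_of_bounded (M := T⁻¹ * (w1 - w0) * (1 - w1) ^ a)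
    measure_Icc_lt_top.ne hy.1.aestronglyMeasurable ?_
  filter_upwards [hy.2] with t ⟨h_nonneg, h_le⟩
  rwa [Real.norm_of_nonneg h_nonneg]

theorem contDiffOn_one_sub_rpow (p : ℝ) : ContDiffOn ℝ 1 (fun x : ℝ ↦ (1 - x) ^ p) (Iio 1) :=
  (contDiffOn_const.sub contDiffOn_id).rpow_const_of_ne fun _ hx ↦ (sub_pos.2 hx).ne'

theorem SolvesDamage.integrableOn {u : ℝ → ℝ} (hu : SolvesDamage T a w1 d0 y u) (hw1 : w1 < 1)
    (hy : IntegrableOn y (Icc 0 T)) :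
    IntegrableOn (fun t ↦ (1 - u t) ^ (-a) * y t) (Icc 0 T) :=
  hy.continuousOn_mul ((contDiffOn_one_sub_rpow (-a)).continuousOn.comp hu.1
    fun t ht ↦ (hu.2.1 t ht).2.trans_lt hw1) isCompact_Icc

theorem damage_integral_equation_uniqueness_general (hw1 : w1 < 1) (hy : IntegrableOn y (Icc 0 T))
    {u1 u2 : ℝ → ℝ} (h1 : SolvesDamage T a w1 d0 y u1) (h2 : SolvesDamage T a w1 d0 y u2) :
    EqOn u1 u2 (Icc 0 T) := by
  obtain ⟨K, hK⟩ : ∃ K, LipschitzOnWith K (fun x : ℝ ↦ (1 - x) ^ (-a)) (Icc 0 w1) :=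
    ((contDiffOn_one_sub_rpow (-a)).mono fun _ hx ↦ hx.2.trans_lt hw1).exists_lipschitzOnWith
      one_ne_zero (convex_Icc 0 w1) isCompact_Icc
  refine eqOn_of_integral_equation_of_lipschitz (f := fun t x ↦ (1 - x) ^ (-a) * y t)
    (k := fun t ↦ K * |y t|) (hy.abs.const_mul _) (.of_forall fun t x hx z hz ↦ ?_)
    h1.2.1 h2.2.1 (h1.integrableOn hw1 hy) (h2.integrableOn hw1 hy) h1.2.2 h2.2.2
  calc ‖(1 - x) ^ (-a) * y t - (1 - z) ^ (-a) * y t‖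
      = ‖(1 - x) ^ (-a) - (1 - z) ^ (-a)‖ * |y t| := by
        rw [← sub_mul, norm_mul, Real.norm_eq_abs (y t)]
    _ ≤ K * ‖x - z‖ * |y t| :=
        mul_le_mul_of_nonneg_right (hK.norm_sub_le hx hz) (abs_nonneg _)
    _ = K * |y t| * ‖x - z‖ := mul_right_comm _ _ _

end Damage

/-- Uniqueness of solutions of the damage integral equation with the same data. -/
theorem damage_integral_equation_uniqueness
    (T a w0 w1 : ℝ) (hT : 0 < T) (ha : 1 ≤ a)
    (hw0 : 0 ≤ w0) (hw01 : w0 ≤ w1) (hw1 : w1 < 1)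
    (d0 : ℝ) (hd0 : d0 ∈ Icc (0 : ℝ) w0)
    (y : ℝ → ℝ) (hy : AdmissibleSource T a w0 w1 y)
    (u1 u2 : ℝ → ℝ)
    (h1 : SolvesDamage T a w1 d0 y u1) (h2 : SolvesDamage T a w1 d0 y u2) :
    ∀ t ∈ Icc (0 : ℝ) T, u1 t = u2 t := by
  exact damage_integral_equation_uniqueness_general hw1 hy.integrableOn h1 h2
end

section
/- Any continuous solution ω of the damage integral equation with initial value d₀ ∈ [0, ω₀] and admissible source y is Lipschitz continuous in time with Lipschitz constant T⁻¹(ω₁ − ω₀), i.e. |ω(t₁) − ω(t₂)| ≤ T⁻¹(ω₁ − ω₀)·|t₁ − t₂| for all t₁, t₂ ∈ [0,T]. -/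
open MeasureTheory Set

/-! A solution stays below `w1 < 1`, so the weight `(1 - ω) ^ (-a)` is at most `(1 - w1) ^ (-a)`.
The bound on the source carries the reciprocal factor `(1 - w1) ^ a`: the two cancel, the integrand
is bounded by `T⁻¹ * (w1 - w0)`, and a primitive of a function bounded by `C` is `C`-Lipschitz. -/

open scoped NNReal

section Primitive

variable {E : Type*} [NormedAddCommGroup E] {f : ℝ → E} {s : Set ℝ} [OrdConnected s] {C : ℝ}

theorem intervalIntegrable_of_ae_norm_le (hf : AEStronglyMeasurable f (volume.restrict s))
    (hC : ∀ᵐ x ∂volume.restrict s, ‖f x‖ ≤ C) {a b : ℝ} (ha : a ∈ s) (hb : b ∈ s) :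
    IntervalIntegrable f volume a b := by
  have hsub : uIcc a b ⊆ s := OrdConnected.uIcc_subset ‹_› ha hb
  have hfab : IntegrableOn f (uIcc a b) :=
    IntegrableOn.of_bound isCompact_uIcc.measure_lt_top (hf.mono_set hsub) C
      (ae_restrict_of_ae_restrict_of_subset hsub hC)
  exact hfab.intervalIntegrable

variable [NormedSpace ℝ E]

theorem norm_intervalIntegral_le_of_ae_norm_le (hC : ∀ᵐ x ∂volume.restrict s, ‖f x‖ ≤ C)
    {a b : ℝ} (ha : a ∈ s) (hb : b ∈ s) : ‖∫ x in a..b, f x‖ ≤ C * |b - a| := by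
  have hsub : uIoc a b ⊆ s := uIoc_subset_uIcc.trans (OrdConnected.uIcc_subset ‹_› ha hb)
  exact intervalIntegral.norm_integral_le_of_norm_le_const_ae <|
    (ae_restrict_iff' measurableSet_uIoc).1 (ae_restrict_of_ae_restrict_of_subset hsub hC)

theorem lipschitzOnWith_intervalIntegral {K : ℝ≥0} {a : ℝ} (ha : a ∈ s)
    (hf : AEStronglyMeasurable f (volume.restrict s))
    (hK : ∀ᵐ x ∂volume.restrict s, ‖f x‖ ≤ K) :
    LipschitzOnWith K (fun t ↦ ∫ x in a..t, f x) s := by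
  refine LipschitzOnWith.of_dist_le_mul fun t₁ h₁ t₂ h₂ ↦ ?_
  rw [dist_eq_norm, Real.dist_eq, intervalIntegral.integral_interval_sub_left
    (intervalIntegrable_of_ae_norm_le hf hK ha h₁) (intervalIntegrable_of_ae_norm_le hf hK ha h₂)]
  exact norm_intervalIntegral_le_of_ae_norm_le hK h₂ h₁

end Primitive

theorem abs_rpow_neg_mul_le {u v a z C : ℝ} (ha : 0 ≤ a) (hu : 0 < u) (huv : u ≤ v)
    (hz : |z| ≤ C * u ^ a) : |v ^ (-a) * z| ≤ C := by
  have hv : 0 < v := hu.trans_le huv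
  have hC : 0 ≤ C :=
    nonneg_of_mul_nonneg_left ((abs_nonneg z).trans hz) (Real.rpow_pos_of_pos hu a)
  rw [abs_mul, Real.abs_rpow_of_nonneg hv.le, abs_of_pos hv, Real.rpow_neg hv.le,
    inv_mul_le_iff₀' (Real.rpow_pos_of_pos hv a)]
  calc |z| ≤ C * u ^ a := hz
    _ ≤ C * v ^ a := by gcongr

namespace SolvesDamage

variable {T a w1 d0 : ℝ} {y ω : ℝ → ℝ}

theorem continuousOn_one_sub_rpow (hω : SolvesDamage T a w1 d0 y ω) (hw1 : w1 < 1) (p : ℝ) :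
    ContinuousOn (fun t ↦ (1 - ω t) ^ p) (Icc 0 T) :=
  (continuousOn_const.sub hω.1).rpow_const fun t ht ↦
    .inl (sub_pos.2 ((hω.2.1 t ht).2.trans_lt hw1)).ne'

theorem ae_norm_integrand_le (hω : SolvesDamage T a w1 d0 y ω) (ha : 0 ≤ a) (hw1 : w1 < 1)
    {C : ℝ} (hy : ∀ᵐ t ∂volume.restrict (Icc 0 T), |y t| ≤ C * (1 - w1) ^ a) :
    ∀ᵐ t ∂volume.restrict (Icc 0 T), ‖(1 - ω t) ^ (-a) * y t‖ ≤ C := by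
  filter_upwards [hy, ae_restrict_mem measurableSet_Icc] with t hyt ht
  exact abs_rpow_neg_mul_le ha (sub_pos.2 hw1) (sub_le_sub_left (hω.2.1 t ht).2 1) hyt

end SolvesDamage

theorem damage_solution_lipschitz_in_time_general {T a w1 d0 : ℝ} {y ω : ℝ → ℝ} {K : ℝ≥0}
    (hT : 0 ≤ T) (ha : 0 ≤ a) (hw1 : w1 < 1)
    (hym : AEStronglyMeasurable y (volume.restrict (Icc 0 T)))
    (hy : ∀ᵐ t ∂volume.restrict (Icc 0 T), |y t| ≤ K * (1 - w1) ^ a)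
    (hω : SolvesDamage T a w1 d0 y ω) : LipschitzOnWith K ω (Icc 0 T) := by
  have hmeas : AEStronglyMeasurable (fun t ↦ (1 - ω t) ^ (-a) * y t) (volume.restrict (Icc 0 T)) :=
    ((hω.continuousOn_one_sub_rpow hw1 (-a)).aestronglyMeasurable measurableSet_Icc).mul hym
  have hprim : LipschitzOnWith K (fun t ↦ ∫ ξ in (0 : ℝ)..t, (1 - ω ξ) ^ (-a) * y ξ) (Icc 0 T) :=
    lipschitzOnWith_intervalIntegral (left_mem_Icc.2 hT) hmeas (hω.ae_norm_integrand_le ha hw1 hy)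
  refine LipschitzOnWith.of_dist_le_mul fun t₁ h₁ t₂ h₂ ↦ ?_
  rw [hω.2.2 t₁ h₁, hω.2.2 t₂ h₂, dist_add_left]
  exact hprim.dist_le_mul t₁ h₁ t₂ h₂

/-- Solutions of the damage integral equation are Lipschitz continuous in time
with Lipschitz constant `T⁻¹(ω₁ − ω₀)`. -/
theorem damage_solution_lipschitz_in_time
    (T a w0 w1 : ℝ) (hT : 0 < T) (ha : 1 ≤ a)
    (hw0 : 0 ≤ w0) (hw01 : w0 ≤ w1) (hw1 : w1 < 1)
    (d0 : ℝ) (hd0 : d0 ∈ Icc (0 : ℝ) w0)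
    (y : ℝ → ℝ) (hy : AdmissibleSource T a w0 w1 y)
    (ω : ℝ → ℝ) (hω : SolvesDamage T a w1 d0 y ω) :
    ∀ t₁ ∈ Icc (0 : ℝ) T, ∀ t₂ ∈ Icc (0 : ℝ) T,
      |ω t₁ - ω t₂| ≤ T⁻¹ * (w1 - w0) * |t₁ - t₂| := by
  let K : ℝ≥0 := ⟨T⁻¹ * (w1 - w0), mul_nonneg (inv_nonneg.2 hT.le) (sub_nonneg.2 hw01)⟩
  have hyK : ∀ᵐ t ∂volume.restrict (Icc 0 T), |y t| ≤ K * (1 - w1) ^ a :=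
    hy.2.mono fun t ht ↦ (abs_of_nonneg ht.1).trans_le ht.2
  exact (damage_solution_lipschitz_in_time_general hT.le (zero_le_one.trans ha) hw1
    hy.1.aestronglyMeasurable hyK hω).dist_le_mul
end

section
/- For every continuous function ω : [0,T] → ℝ with 0 ≤ ω(t) ≤ ω₁ for all t, every initial value d₀ ∈ [0, ω₀] and every admissible source y, the function Oω satisfies 0 ≤ (Oω)(t) ≤ ω₁ for every t ∈ [0,T]; i.e. the operator O maps the set of continuous functions with values in [0, ω₁] into itself. -/
open MeasureTheory Set

/-- The fixed-point operator `(Oω)(t) = d₀ + ∫₀ᵗ (1 − ω(ξ))^(−α) y(ξ) dξ`. -/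
noncomputable def damageOp (a d0 : ℝ) (y ω : ℝ → ℝ) (t : ℝ) : ℝ :=
  d0 + ∫ ξ in (0 : ℝ)..t, (1 - ω ξ) ^ (-a) * y ξ

/-! The factor `(1 − ω₁)^α` in the bound on the source cancels the largest possible value
`(1 − ω₁)^(−α)` of `(1 − ω)^(−α)`. The integrand therefore lies in `[0, T⁻¹(ω₁ − ω₀)]`, so over
`[0, T]` the damage grows from `d₀ ≤ ω₀` by at most `ω₁ − ω₀`. -/

lemma rpow_neg_mul_mem_Icc {a c x k v : ℝ} (ha : 0 ≤ a) (hc : 0 < c) (hcx : c ≤ x)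
    (hv : v ∈ Icc 0 (k * c ^ a)) : x ^ (-a) * v ∈ Icc 0 k := by
  refine ⟨mul_nonneg (Real.rpow_nonneg (hc.le.trans hcx) _) hv.1, ?_⟩
  calc x ^ (-a) * v
      ≤ c ^ (-a) * (k * c ^ a) :=
        mul_le_mul (Real.rpow_le_rpow_of_nonpos hc hcx (neg_nonpos.2 ha)) hv.2 hv.1
          (Real.rpow_nonneg hc.le _)
    _ = k := by
        rw [mul_left_comm, ← Real.rpow_add hc, neg_add_cancel, Real.rpow_zero, mul_one]

lemma intervalIntegral_mem_Icc_of_ae_mem_Icc {μ : Measure ℝ} [IsLocallyFiniteMeasure μ]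
    {f : ℝ → ℝ} {a b C t : ℝ} (hf : IntegrableOn f (Icc a b) μ)
    (hfC : ∀ᵐ x ∂μ.restrict (Icc a b), f x ∈ Icc 0 C) (ht : t ∈ Icc a b) :
    ∫ x in a..t, f x ∂μ ∈ Icc 0 (μ.real (Ioc a b) * C) := by
  have hab : a ≤ b := ht.1.trans ht.2
  have hf' : IntervalIntegrable f μ a b :=
    (intervalIntegrable_iff_integrableOn_Ioc_of_le hab).2 (hf.mono_set Ioc_subset_Icc_self)
  have hf_nonneg : 0 ≤ᵐ[μ.restrict (Icc a b)] f := hfC.mono fun _ h ↦ h.1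
  constructor
  · exact intervalIntegral.integral_nonneg_of_ae_restrict ht.1
      (ae_restrict_of_ae_restrict_of_subset (Icc_subset_Icc_right ht.2) hf_nonneg)
  · calc ∫ x in a..t, f x ∂μ
        ≤ ∫ x in a..b, f x ∂μ :=
          intervalIntegral.integral_mono_interval le_rfl ht.1 ht.2
            (ae_restrict_of_ae_restrict_of_subset Ioc_subset_Icc_self hf_nonneg) hf'
      _ ≤ ∫ _ in a..b, C ∂μ :=
          intervalIntegral.integral_mono_ae_restrict hab hf' intervalIntegrable_const
            (hfC.mono fun _ h ↦ h.2)
      _ = μ.real (Ioc a b) * C := by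
          rw [intervalIntegral.integral_of_le hab, setIntegral_const, smul_eq_mul]

namespace AdmissibleSource

variable {T a w0 w1 : ℝ} {y ω : ℝ → ℝ}

lemma ae_rpow_neg_mul_mem_Icc (hy : AdmissibleSource T a w0 w1 y) (ha : 0 ≤ a) (hw1 : w1 < 1)
    (hω : ∀ᵐ t ∂volume.restrict (Icc 0 T), ω t ≤ w1) :
    ∀ᵐ t ∂volume.restrict (Icc 0 T),
      (1 - ω t) ^ (-a) * y t ∈ Icc 0 (T⁻¹ * (w1 - w0)) := by
  filter_upwards [hy.2, hω] with t hyt hωt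
  exact rpow_neg_mul_mem_Icc ha (sub_pos.2 hw1) (sub_le_sub_left hωt 1) hyt

lemma integrableOn_rpow_neg_mul (hy : AdmissibleSource T a w0 w1 y) (ha : 0 ≤ a) (hw1 : w1 < 1)
    (hωm : AEMeasurable ω (volume.restrict (Icc 0 T)))
    (hω : ∀ᵐ t ∂volume.restrict (Icc 0 T), ω t ≤ w1) :
    IntegrableOn (fun t ↦ (1 - ω t) ^ (-a) * y t) (Icc 0 T) :=
  Integrable.of_mem_Icc 0 (T⁻¹ * (w1 - w0))
    (((hωm.const_sub 1).pow_const (-a)).mul hy.1.aemeasurable)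
    (hy.ae_rpow_neg_mul_mem_Icc ha hw1 hω)

end AdmissibleSource

lemma continuousOn_damageOp {T a : ℝ} {y ω : ℝ → ℝ} (d0 : ℝ)
    (hint : IntegrableOn (fun t ↦ (1 - ω t) ^ (-a) * y t) (uIcc 0 T)) :
    ContinuousOn (damageOp a d0 y ω) (uIcc 0 T) :=
  continuousOn_const.add (intervalIntegral.continuousOn_primitive_interval hint)

theorem damageOp_maps_into_itself_general
    {T a w0 w1 : ℝ} (hT : 0 < T) (ha : 0 ≤ a) (hw1 : w1 < 1)
    {d0 : ℝ} (hd0 : d0 ∈ Icc 0 w0)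
    {y : ℝ → ℝ} (hy : AdmissibleSource T a w0 w1 y)
    {ω : ℝ → ℝ} (hωm : AEMeasurable ω (volume.restrict (Icc 0 T)))
    (hω : ∀ᵐ t ∂volume.restrict (Icc 0 T), ω t ≤ w1) :
    ContinuousOn (damageOp a d0 y ω) (Icc 0 T) ∧
      ∀ t ∈ Icc 0 T, 0 ≤ damageOp a d0 y ω t ∧ damageOp a d0 y ω t ≤ w1 := by
  have hint := hy.integrableOn_rpow_neg_mul ha hw1 hωm hω
  have hcont : ContinuousOn (damageOp a d0 y ω) (Icc 0 T) := by
    rw [← uIcc_of_le hT.le] at hint ⊢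
    exact continuousOn_damageOp d0 hint
  refine ⟨hcont, fun t ht ↦ ?_⟩
  obtain ⟨increment_nonneg, increment_le⟩ :=
    intervalIntegral_mem_Icc_of_ae_mem_Icc hint (hy.ae_rpow_neg_mul_mem_Icc ha hw1 hω) ht
  rw [Real.volume_real_Ioc_of_le hT.le, sub_zero, mul_inv_cancel_left₀ hT.ne'] at increment_le
  exact ⟨add_nonneg hd0.1 increment_nonneg,
    (add_le_add hd0.2 increment_le).trans_eq (add_sub_cancel w0 w1)⟩

/-- The operator `O` maps continuous functions on `[0,T]` with values in `[0, ω₁]`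
into themselves. -/
theorem damageOp_maps_into_itself
    (T a w0 w1 : ℝ) (hT : 0 < T) (ha : 1 ≤ a)
    (hw0 : 0 ≤ w0) (hw01 : w0 ≤ w1) (hw1 : w1 < 1)
    (d0 : ℝ) (hd0 : d0 ∈ Icc (0 : ℝ) w0)
    (y : ℝ → ℝ) (hy : AdmissibleSource T a w0 w1 y)
    (ω : ℝ → ℝ) (hωc : ContinuousOn ω (Icc (0 : ℝ) T))
    (hωb : ∀ t ∈ Icc (0 : ℝ) T, ω t ∈ Icc (0 : ℝ) w1) :
    ContinuousOn (damageOp a d0 y ω) (Icc (0 : ℝ) T) ∧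
      ∀ t ∈ Icc (0 : ℝ) T, 0 ≤ damageOp a d0 y ω t ∧ damageOp a d0 y ω t ≤ w1 :=
  damageOp_maps_into_itself_general hT (zero_le_one.trans ha) hw1 hd0 hy
    (hωc.aemeasurable measurableSet_Icc)
    (ae_restrict_of_forall_mem measurableSet_Icc fun t ht ↦ (hωb t ht).2)
end

section
/- For all continuous functions ω₁, ω₂ : [0,T] → ℝ with values in [0, ω₁], every d₀ ∈ [0, ω₀], every admissible source y and every t ∈ [0,T] one has |(Oω₁)(t) − (Oω₂)(t)| ≤ α·T⁻¹(ω₁ − ω₀)(1 − ω₁)^{−1} · ∫₀ᵗ |ω₁(ξ) − ω₂(ξ)| dξ; in particular |(Oω₁)(t) − (Oω₂)(t)| ≤ α(ω₁ − ω₀)(1 − ω₁)^{−1} · max_{s∈[0,T]} |ω₁(s) − ω₂(s)|. -/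
open MeasureTheory Set

/-! On `(-∞, ω₁]` the map `s ↦ (1 - s) ^ (-α)` is Lipschitz with constant
`α (1 - ω₁) ^ (-α - 1)`, while the source is at most `T⁻¹ (ω₁ - ω₀) (1 - ω₁) ^ α`. In the product
of the two bounds the powers of `1 - ω₁` collapse to `(1 - ω₁)⁻¹`. -/

lemma abs_rpow_sub_rpow_le {p c x z : ℝ} (hp : p ≤ 1) (hc : 0 < c) (hx : c ≤ x) (hz : c ≤ z) :
    |x ^ p - z ^ p| ≤ |p| * c ^ (p - 1) * |x - z| := by
  have hderiv : ∀ s ∈ Ici c, HasDerivWithinAt (fun s : ℝ => s ^ p) (p * s ^ (p - 1)) (Ici c) s :=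
    fun s hs => (Real.hasDerivAt_rpow_const (Or.inl (hc.trans_le hs).ne')).hasDerivWithinAt
  have hbound : ∀ s ∈ Ici c, ‖p * s ^ (p - 1)‖ ≤ |p| * c ^ (p - 1) := fun s hs => by
    rw [Real.norm_eq_abs, abs_mul, abs_of_nonneg (Real.rpow_nonneg (hc.le.trans hs) _)]
    exact mul_le_mul_of_nonneg_left
      (Real.rpow_le_rpow_of_nonpos hc hs (sub_nonpos.mpr hp)) (abs_nonneg p)
  exact (convex_Ici c).norm_image_sub_le_of_norm_hasDerivWithin_le hderiv hbound hz hx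

section Integral

variable {X : Type*} [MeasurableSpace X] {μ : Measure X} {f g y : X → ℝ} {p c K : ℝ}

lemma integrable_rpow_of_nonpos [IsFiniteMeasure μ] (hp : p ≤ 0) (hc : 0 < c)
    (hf : AEStronglyMeasurable f μ) (hcf : ∀ᵐ x ∂μ, c ≤ f x) :
    Integrable (fun x => f x ^ p) μ := by
  refine Integrable.of_bound (hf.aemeasurable.pow_const p).aestronglyMeasurable (c ^ p) ?_
  filter_upwards [hcf] with x hx
  rw [Real.norm_of_nonneg (Real.rpow_nonneg (hc.le.trans hx) p)]
  exact Real.rpow_le_rpow_of_nonpos hc hx hp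

lemma integral_abs_rpow_sub_rpow_le (hp : p ≤ 1) (hc : 0 < c)
    (hcf : ∀ᵐ x ∂μ, c ≤ f x) (hcg : ∀ᵐ x ∂μ, c ≤ g x) (hfg : Integrable (fun x => f x - g x) μ) :
    ∫ x, |f x ^ p - g x ^ p| ∂μ ≤ |p| * c ^ (p - 1) * ∫ x, |f x - g x| ∂μ := by
  rw [← integral_const_mul]
  refine integral_mono_of_nonneg (ae_of_all _ fun _ => abs_nonneg _) (hfg.abs.const_mul _) ?_
  filter_upwards [hcf, hcg] with x hfx hgx
  exact abs_rpow_sub_rpow_le hp hc hfx hgx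

lemma abs_integral_mul_sub_integral_mul_le (hf : Integrable f μ) (hg : Integrable g μ)
    (hy : AEStronglyMeasurable y μ) (hyK : ∀ᵐ x ∂μ, |y x| ≤ K) :
    |(∫ x, f x * y x ∂μ) - ∫ x, g x * y x ∂μ| ≤ K * ∫ x, |f x - g x| ∂μ := by
  rw [← integral_sub (hf.mul_bdd hy hyK) (hg.mul_bdd hy hyK), ← integral_const_mul,
    ← Real.norm_eq_abs]
  refine norm_integral_le_of_norm_le ((hf.sub hg).abs.const_mul K) ?_
  filter_upwards [hyK] with x hx
  rw [← sub_mul, norm_mul, mul_comm]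
  exact mul_le_mul_of_nonneg_right hx (abs_nonneg _)

lemma abs_integral_rpow_mul_sub_integral_rpow_mul_le [IsFiniteMeasure μ] (hp : p ≤ 0)
    (hc : 0 < c) (hf : AEStronglyMeasurable f μ) (hg : AEStronglyMeasurable g μ)
    (hcf : ∀ᵐ x ∂μ, c ≤ f x) (hcg : ∀ᵐ x ∂μ, c ≤ g x) (hfg : Integrable (fun x => f x - g x) μ)
    (hy : AEStronglyMeasurable y μ) (hK : 0 ≤ K) (hyK : ∀ᵐ x ∂μ, |y x| ≤ K) :
    |(∫ x, f x ^ p * y x ∂μ) - ∫ x, g x ^ p * y x ∂μ| ≤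
      |p| * c ^ (p - 1) * K * ∫ x, |f x - g x| ∂μ :=
  calc |(∫ x, f x ^ p * y x ∂μ) - ∫ x, g x ^ p * y x ∂μ|
      ≤ K * ∫ x, |f x ^ p - g x ^ p| ∂μ :=
        abs_integral_mul_sub_integral_mul_le (integrable_rpow_of_nonpos hp hc hf hcf)
          (integrable_rpow_of_nonpos hp hc hg hcg) hy hyK
    _ ≤ K * (|p| * c ^ (p - 1) * ∫ x, |f x - g x| ∂μ) :=
        mul_le_mul_of_nonneg_left
          (integral_abs_rpow_sub_rpow_le (hp.trans zero_le_one) hc hcf hcg hfg) hK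
    _ = |p| * c ^ (p - 1) * K * ∫ x, |f x - g x| ∂μ := by ring

end Integral

lemma integral_abs_le_mul_sSup_image {a b t : ℝ} {f : ℝ → ℝ} (ht : t ∈ Icc a b)
    (hf : BddAbove ((fun s => |f s|) '' Icc a b)) :
    ∫ s in a..t, |f s| ≤ (b - a) * sSup ((fun s => |f s|) '' Icc a b) := by
  have hle : ∀ s ∈ Icc a b, |f s| ≤ sSup ((fun s => |f s|) '' Icc a b) :=
    fun s hs => le_csSup hf (mem_image_of_mem _ hs)
  calc ∫ s in a..t, |f s| ≤ ‖∫ s in a..t, |f s|‖ := Real.le_norm_self _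
    _ ≤ sSup ((fun s => |f s|) '' Icc a b) * |t - a| := by
        refine intervalIntegral.norm_integral_le_of_norm_le_const fun s hs => ?_
        rw [uIoc_of_le ht.1] at hs
        rw [Real.norm_eq_abs, abs_abs]
        exact hle s ⟨hs.1.le, hs.2.trans ht.2⟩
    _ ≤ (b - a) * sSup ((fun s => |f s|) '' Icc a b) := by
        rw [abs_of_nonneg (sub_nonneg.mpr ht.1), mul_comm]
        exact mul_le_mul_of_nonneg_right (sub_le_sub_right ht.2 a)
          ((abs_nonneg _).trans (hle t ht))

lemma abs_damageOp_sub_le {a w K t : ℝ} (ha : 0 ≤ a) (hw : w < 1) (ht : 0 ≤ t) (d0 : ℝ)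
    {y u1 u2 : ℝ → ℝ} (hy : AEStronglyMeasurable y (volume.restrict (Ioc 0 t))) (hK : 0 ≤ K)
    (hyK : ∀ᵐ s ∂volume.restrict (Ioc 0 t), |y s| ≤ K)
    (hu1 : AEStronglyMeasurable u1 (volume.restrict (Ioc 0 t)))
    (hu2 : AEStronglyMeasurable u2 (volume.restrict (Ioc 0 t)))
    (hu1w : ∀ᵐ s ∂volume.restrict (Ioc 0 t), u1 s ≤ w)
    (hu2w : ∀ᵐ s ∂volume.restrict (Ioc 0 t), u2 s ≤ w)
    (hu : IntegrableOn (fun s => u1 s - u2 s) (Ioc 0 t)) :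
    |damageOp a d0 y u1 t - damageOp a d0 y u2 t| ≤
      a * (1 - w) ^ (-a - 1) * K * ∫ s in (0 : ℝ)..t, |u1 s - u2 s| := by
  have hsub : ∀ s, 1 - u1 s - (1 - u2 s) = -(u1 s - u2 s) := fun s => by ring
  have h := abs_integral_rpow_mul_sub_integral_rpow_mul_le
    (f := fun s => 1 - u1 s) (g := fun s => 1 - u2 s) (neg_nonpos.mpr ha) (sub_pos.mpr hw)
    (aestronglyMeasurable_const.sub hu1) (aestronglyMeasurable_const.sub hu2)
    (hu1w.mono fun _ hs => sub_le_sub_left hs 1) (hu2w.mono fun _ hs => sub_le_sub_left hs 1)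
    ((integrable_congr (ae_of_all _ hsub)).mpr hu.neg) hy hK hyK
  simp only [hsub, abs_neg, abs_of_nonneg ha] at h
  simpa only [damageOp, add_sub_add_left_eq_sub, intervalIntegral.integral_of_le ht] using h

theorem damageOp_lipschitz_estimate_general {T a w0 w1 : ℝ} (hT : 0 < T) (ha : 0 ≤ a)
    (hw01 : w0 ≤ w1) (hw1 : w1 < 1) (d0 : ℝ) {y u1 u2 : ℝ → ℝ}
    (hy : AEStronglyMeasurable y (volume.restrict (Icc 0 T)))
    (hyM : ∀ᵐ t ∂volume.restrict (Icc 0 T), |y t| ≤ T⁻¹ * (w1 - w0) * (1 - w1) ^ a)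
    (hu1 : AEStronglyMeasurable u1 (volume.restrict (Icc 0 T)))
    (hu2 : AEStronglyMeasurable u2 (volume.restrict (Icc 0 T)))
    (hu1w : ∀ t ∈ Icc 0 T, u1 t ≤ w1) (hu2w : ∀ t ∈ Icc 0 T, u2 t ≤ w1)
    (hbdd : BddAbove ((fun s => |u1 s - u2 s|) '' Icc 0 T)) {t : ℝ} (ht : t ∈ Icc 0 T) :
    |damageOp a d0 y u1 t - damageOp a d0 y u2 t| ≤
        a * T⁻¹ * (w1 - w0) * (1 - w1)⁻¹ * ∫ ξ in (0 : ℝ)..t, |u1 ξ - u2 ξ| ∧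
      |damageOp a d0 y u1 t - damageOp a d0 y u2 t| ≤
        a * (w1 - w0) * (1 - w1)⁻¹ * sSup ((fun s => |u1 s - u2 s|) '' Icc 0 T) := by
  have hw1' : 0 < 1 - w1 := sub_pos.mpr hw1
  have : 0 ≤ w1 - w0 := sub_nonneg.mpr hw01
  have hsub : Ioc 0 t ⊆ Icc 0 T := fun s hs => ⟨hs.1.le, hs.2.trans ht.2⟩
  have hμ : volume.restrict (Ioc 0 t) ≤ volume.restrict (Icc 0 T) :=
    Measure.restrict_mono hsub le_rfl
  have hdiff : IntegrableOn (fun s => u1 s - u2 s) (Icc 0 T) := by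
    obtain ⟨C, hC⟩ := hbdd
    exact Integrable.of_bound (hu1.sub hu2) C
      (ae_restrict_of_forall_mem measurableSet_Icc fun s hs => hC (mem_image_of_mem _ hs))
  have hconst : a * (1 - w1) ^ (-a - 1) * (T⁻¹ * (w1 - w0) * (1 - w1) ^ a) =
      a * T⁻¹ * (w1 - w0) * (1 - w1)⁻¹ := by
    rw [Real.rpow_sub_one hw1'.ne', Real.rpow_neg hw1'.le]
    field_simp
  have hintegral := abs_damageOp_sub_le ha hw1 ht.1 d0 (hy.mono_measure hμ) (by positivity)
    (ae_mono hμ hyM) (hu1.mono_measure hμ) (hu2.mono_measure hμ)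
    (ae_restrict_of_forall_mem measurableSet_Ioc fun s hs => hu1w s (hsub hs))
    (ae_restrict_of_forall_mem measurableSet_Ioc fun s hs => hu2w s (hsub hs))
    (hdiff.mono_set hsub)
  rw [hconst] at hintegral
  refine ⟨hintegral, hintegral.trans ?_⟩
  calc a * T⁻¹ * (w1 - w0) * (1 - w1)⁻¹ * ∫ ξ in (0 : ℝ)..t, |u1 ξ - u2 ξ|
      ≤ a * T⁻¹ * (w1 - w0) * (1 - w1)⁻¹ *
          ((T - 0) * sSup ((fun s => |u1 s - u2 s|) '' Icc 0 T)) :=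
        mul_le_mul_of_nonneg_left (integral_abs_le_mul_sSup_image ht hbdd) (by positivity)
    _ = a * (w1 - w0) * (1 - w1)⁻¹ * sSup ((fun s => |u1 s - u2 s|) '' Icc 0 T) := by
        rw [sub_zero]
        field_simp

/-- Integral Lipschitz estimate for the fixed-point operator `O`. -/
theorem damageOp_lipschitz_estimate
    (T a w0 w1 : ℝ) (hT : 0 < T) (ha : 1 ≤ a)
    (hw0 : 0 ≤ w0) (hw01 : w0 ≤ w1) (hw1 : w1 < 1)
    (d0 : ℝ) (hd0 : d0 ∈ Icc (0 : ℝ) w0)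
    (y : ℝ → ℝ) (hy : AdmissibleSource T a w0 w1 y)
    (u1 u2 : ℝ → ℝ)
    (hc1 : ContinuousOn u1 (Icc (0 : ℝ) T)) (hc2 : ContinuousOn u2 (Icc (0 : ℝ) T))
    (hb1 : ∀ t ∈ Icc (0 : ℝ) T, u1 t ∈ Icc (0 : ℝ) w1)
    (hb2 : ∀ t ∈ Icc (0 : ℝ) T, u2 t ∈ Icc (0 : ℝ) w1) :
    ∀ t ∈ Icc (0 : ℝ) T,
      |damageOp a d0 y u1 t - damageOp a d0 y u2 t| ≤
        a * T⁻¹ * (w1 - w0) * (1 - w1)⁻¹ * ∫ ξ in (0 : ℝ)..t, |u1 ξ - u2 ξ| ∧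
      |damageOp a d0 y u1 t - damageOp a d0 y u2 t| ≤
        a * (w1 - w0) * (1 - w1)⁻¹ * sSup ((fun s => |u1 s - u2 s|) '' Icc (0 : ℝ) T) :=
  fun _ ht => damageOp_lipschitz_estimate_general hT (zero_le_one.trans ha) hw01 hw1 d0
    hy.1.aestronglyMeasurable (hy.2.mono fun _ h => (abs_of_nonneg h.1).trans_le h.2)
    (hc1.aestronglyMeasurable measurableSet_Icc) (hc2.aestronglyMeasurable measurableSet_Icc)
    (fun s hs => (hb1 s hs).2) (fun s hs => (hb2 s hs).2)
    (isCompact_Icc.image_of_continuousOn (hc1.sub hc2).abs).bddAbove ht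
end

section
/- For every λ > 0 and all continuous functions ω₁, ω₂ : [0,T] → ℝ with values in [0, ω₁], every d₀ ∈ [0, ω₀] and every admissible source y, the operator O is a contraction for the weighted (Bielecki) norm up to the factor λ⁻¹: ‖Oω₁ − Oω₂‖_λ ≤ λ⁻¹ · α·T⁻¹(ω₁ − ω₀)(1 − ω₁)^{−1} · ‖ω₁ − ω₂‖_λ, where ‖f‖_λ := max_{t∈[0,T]} e^{−λt}|f(t)|. -/
/-!
The function `x ↦ (1 - x)^(-α)` is Lipschitz on `(-∞, ω₁]`, so the difference of two images obeys a
Volterra bound `|Oω₁ - Oω₂|(t) ≤ L ∫₀ᵗ |ω₁ - ω₂|`. The Bielecki weight turns every such bound into a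
factor `L / λ`: inside the integral
`|ω₁ - ω₂|(ξ) ≤ ‖ω₁ - ω₂‖_λ e^{λξ}`, and `∫₀ᵗ e^{λξ} dξ ≤ λ⁻¹ e^{λt}`.
-/

open MeasureTheory Set

/-- The weighted (Bielecki) norm `‖f‖_λ := max_{t∈[0,T]} e^{−λt}|f(t)|`. -/
noncomputable def bieleckiNorm (T lam : ℝ) (f : ℝ → ℝ) : ℝ :=
  sSup ((fun t => Real.exp (-lam * t) * |f t|) '' Icc (0 : ℝ) T)

section BieleckiNorm

variable {T lam : ℝ} {f g : ℝ → ℝ}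

lemma exp_mul_abs_le_bieleckiNorm (hf : ContinuousOn f (Icc 0 T)) {t : ℝ} (ht : t ∈ Icc 0 T) :
    Real.exp (-lam * t) * |f t| ≤ bieleckiNorm T lam f := by
  have hcont : ContinuousOn (fun t => Real.exp (-lam * t) * |f t|) (Icc 0 T) :=
    Continuous.continuousOn (by fun_prop) |>.mul hf.abs
  exact le_csSup (isCompact_Icc.bddAbove_image hcont) (mem_image_of_mem _ ht)

lemma abs_le_bieleckiNorm_mul_exp (hf : ContinuousOn f (Icc 0 T)) {t : ℝ} (ht : t ∈ Icc 0 T) :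
    |f t| ≤ bieleckiNorm T lam f * Real.exp (lam * t) := by
  have h := exp_mul_abs_le_bieleckiNorm (lam := lam) hf ht
  rwa [neg_mul, Real.exp_neg, inv_mul_le_iff₀' (Real.exp_pos _)] at h

lemma bieleckiNorm_nonneg : 0 ≤ bieleckiNorm T lam f :=
  Real.sSup_nonneg <| forall_mem_image.2 fun _ _ => by positivity

lemma bieleckiNorm_le {C : ℝ} (hT : 0 ≤ T)
    (h : ∀ t ∈ Icc 0 T, |f t| ≤ C * Real.exp (lam * t)) : bieleckiNorm T lam f ≤ C := by
  refine csSup_le ((nonempty_Icc.2 hT).image _) (forall_mem_image.2 fun t ht => ?_)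
  rw [neg_mul, Real.exp_neg, inv_mul_le_iff₀' (Real.exp_pos _)]
  exact h t ht

lemma integral_exp_mul_le (hlam : 0 < lam) (t : ℝ) :
    ∫ s in (0 : ℝ)..t, Real.exp (lam * s) ≤ lam⁻¹ * Real.exp (lam * t) := by
  rw [intervalIntegral.integral_comp_mul_left Real.exp hlam.ne', integral_exp, smul_eq_mul]
  gcongr
  exact sub_le_self _ (Real.exp_pos _).le

theorem bieleckiNorm_le_of_abs_le_integral {L : ℝ} (hT : 0 ≤ T) (hlam : 0 < lam) (hL : 0 ≤ L)
    (hf : ContinuousOn f (Icc 0 T))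
    (hg : ∀ t ∈ Icc 0 T, |g t| ≤ L * ∫ s in (0 : ℝ)..t, |f s|) :
    bieleckiNorm T lam g ≤ lam⁻¹ * L * bieleckiNorm T lam f := by
  set N := bieleckiNorm T lam f
  have hN : 0 ≤ N := bieleckiNorm_nonneg
  refine bieleckiNorm_le hT fun t ht => ?_
  have hsub : Icc 0 t ⊆ Icc 0 T := Icc_subset_Icc_right ht.2
  have hfint : IntervalIntegrable (fun s => |f s|) volume 0 t :=
    (hf.mono hsub).abs.intervalIntegrable_of_Icc ht.1
  have hexp : IntervalIntegrable (fun s => N * Real.exp (lam * s)) volume 0 t :=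
    Continuous.intervalIntegrable (by fun_prop) 0 t
  calc |g t| ≤ L * ∫ s in (0 : ℝ)..t, |f s| := hg t ht
    _ ≤ L * ∫ s in (0 : ℝ)..t, N * Real.exp (lam * s) := by
      gcongr
      exact intervalIntegral.integral_mono_on ht.1 hfint hexp fun s hs =>
        abs_le_bieleckiNorm_mul_exp hf (hsub hs)
    _ = L * (N * ∫ s in (0 : ℝ)..t, Real.exp (lam * s)) := by
      rw [intervalIntegral.integral_const_mul]
    _ ≤ L * (N * (lam⁻¹ * Real.exp (lam * t))) := by
      gcongr
      exact integral_exp_mul_le hlam t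
    _ = lam⁻¹ * L * N * Real.exp (lam * t) := by ring

end BieleckiNorm

lemma abs_one_sub_rpow_sub_le {p w x z : ℝ} (hp : p ≤ 1) (hw : w < 1) (hx : x ≤ w) (hz : z ≤ w) :
    |(1 - x) ^ p - (1 - z) ^ p| ≤ |p| * (1 - w) ^ (p - 1) * |x - z| := by
  have h := abs_rpow_sub_rpow_le hp (sub_pos.2 hw) (sub_le_sub_left hx 1) (sub_le_sub_left hz 1)
  rwa [sub_sub_sub_cancel_left, abs_sub_comm z] at h

section DamageOp

variable {a d0 w M t : ℝ} {y u v : ℝ → ℝ}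

lemma intervalIntegrable_one_sub_rpow_mul {s : ℝ} (p : ℝ) (hy : IntervalIntegrable y volume s t)
    (hu : ContinuousOn u (uIcc s t)) (hu1 : ∀ ξ ∈ uIcc s t, u ξ ≠ 1) :
    IntervalIntegrable (fun ξ => (1 - u ξ) ^ p * y ξ) volume s t :=
  hy.continuousOn_mul <| (continuousOn_const.sub hu).rpow_const fun ξ hξ =>
    .inl (sub_ne_zero.2 (hu1 ξ hξ).symm)

lemma abs_damageOp_sub_le_s5 (ha : -1 ≤ a) (hw : w < 1) (ht : 0 ≤ t)
    (hy : AEStronglyMeasurable y (volume.restrict (Icc 0 t)))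
    (hyM : ∀ᵐ ξ ∂volume.restrict (Icc 0 t), |y ξ| ≤ M)
    (hu : ContinuousOn u (Icc 0 t)) (hv : ContinuousOn v (Icc 0 t))
    (huw : ∀ ξ ∈ Icc 0 t, u ξ ≤ w) (hvw : ∀ ξ ∈ Icc 0 t, v ξ ≤ w) :
    |damageOp a d0 y u t - damageOp a d0 y v t| ≤
      |a| * (1 - w) ^ (-a - 1) * M * ∫ ξ in (0 : ℝ)..t, |u ξ - v ξ| := by
  have hyint : IntervalIntegrable y volume 0 t :=
    (intervalIntegrable_iff_integrableOn_Icc_of_le ht).2 (.of_bound measure_Icc_lt_top hy M hyM)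
  have hint : ∀ {z : ℝ → ℝ}, ContinuousOn z (Icc 0 t) → (∀ ξ ∈ Icc 0 t, z ξ ≤ w) →
      IntervalIntegrable (fun ξ => (1 - z ξ) ^ (-a) * y ξ) volume 0 t := fun hz hzw => by
    rw [← uIcc_of_le ht] at hz hzw
    exact intervalIntegrable_one_sub_rpow_mul _ hyint hz fun ξ hξ => ((hzw ξ hξ).trans_lt hw).ne
  rw [damageOp, damageOp, add_sub_add_left_eq_sub,
    ← intervalIntegral.integral_sub (hint hu huw) (hint hv hvw),
    ← intervalIntegral.integral_const_mul, ← Real.norm_eq_abs (∫ _ in _.._, _)]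
  have hdist : IntervalIntegrable (fun ξ => |u ξ - v ξ|) volume 0 t :=
    (hu.sub hv).abs.intervalIntegrable_of_Icc ht
  refine intervalIntegral.norm_integral_le_of_norm_le ht ?_ (hdist.const_mul _)
  filter_upwards [(ae_restrict_iff' measurableSet_Icc).1 hyM] with ξ hyξ hξ
  have hξ' : ξ ∈ Icc 0 t := Ioc_subset_Icc_self hξ
  calc ‖(1 - u ξ) ^ (-a) * y ξ - (1 - v ξ) ^ (-a) * y ξ‖
      = |(1 - u ξ) ^ (-a) - (1 - v ξ) ^ (-a)| * |y ξ| := by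
        rw [← sub_mul, norm_mul, Real.norm_eq_abs, Real.norm_eq_abs]
    _ ≤ |a| * (1 - w) ^ (-a - 1) * |u ξ - v ξ| * M := by
        have hlip := abs_one_sub_rpow_sub_le (neg_le.1 ha) hw (huw ξ hξ') (hvw ξ hξ')
        rw [abs_neg] at hlip
        exact mul_le_mul hlip (hyξ hξ') (abs_nonneg _) ((abs_nonneg _).trans hlip)
    _ = |a| * (1 - w) ^ (-a - 1) * M * |u ξ - v ξ| := by ring

theorem damageOp_bielecki_contraction_general {T lam : ℝ} (hT : 0 < T) (ha : -1 ≤ a) (hw : w < 1)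
    (hlam : 0 < lam) (hy : AEStronglyMeasurable y (volume.restrict (Icc 0 T)))
    (hyM : ∀ᵐ ξ ∂volume.restrict (Icc 0 T), |y ξ| ≤ M)
    (hu : ContinuousOn u (Icc 0 T)) (hv : ContinuousOn v (Icc 0 T))
    (huw : ∀ ξ ∈ Icc 0 T, u ξ ≤ w) (hvw : ∀ ξ ∈ Icc 0 T, v ξ ≤ w) :
    bieleckiNorm T lam (fun t => damageOp a d0 y u t - damageOp a d0 y v t) ≤
      lam⁻¹ * (|a| * (1 - w) ^ (-a - 1) * M) * bieleckiNorm T lam (fun t => u t - v t) := by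
  have hM : 0 ≤ M := by
    have : (ae (volume.restrict (Icc 0 T))).NeBot := ae_restrict_neBot.2 (by simp [hT])
    obtain ⟨ξ, hξ⟩ := hyM.exists
    exact (abs_nonneg _).trans hξ
  have hL : 0 ≤ |a| * (1 - w) ^ (-a - 1) * M :=
    mul_nonneg (mul_nonneg (abs_nonneg a) (Real.rpow_nonneg (sub_pos.2 hw).le _)) hM
  refine bieleckiNorm_le_of_abs_le_integral hT.le hlam hL (hu.sub hv) fun t ht => ?_
  have hsub : Icc 0 t ⊆ Icc 0 T := Icc_subset_Icc_right ht.2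
  exact abs_damageOp_sub_le_s5 ha hw ht.1 (hy.mono_set hsub)
    (ae_restrict_of_ae_restrict_of_subset hsub hyM) (hu.mono hsub) (hv.mono hsub)
    (fun ξ hξ => huw ξ (hsub hξ)) fun ξ hξ => hvw ξ (hsub hξ)

end DamageOp

lemma AdmissibleSource.ae_abs_le {T a w0 w1 : ℝ} {y : ℝ → ℝ} (hy : AdmissibleSource T a w0 w1 y) :
    ∀ᵐ t ∂volume.restrict (Icc 0 T), |y t| ≤ T⁻¹ * (w1 - w0) * (1 - w1) ^ a :=
  hy.2.mono fun _ h => (abs_of_nonneg h.1).trans_le h.2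

lemma abs_mul_rpow_mul_mul_rpow {a x : ℝ} (ha : 0 ≤ a) (hx : 0 < x) (k : ℝ) :
    |a| * x ^ (-a - 1) * (k * x ^ a) = a * k * x⁻¹ := by
  have hpow : x ^ (-a - 1) * x ^ a = x⁻¹ := by
    rw [← Real.rpow_add hx, ← Real.rpow_neg_one]
    ring_nf
  rw [abs_of_nonneg ha, ← hpow]
  ring

/-- The operator `O` is a contraction up to the factor `λ⁻¹` with respect to the
Bielecki norm. -/
theorem damageOp_bielecki_contraction
    (T a w0 w1 : ℝ) (hT : 0 < T) (ha : 1 ≤ a)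
    (hw0 : 0 ≤ w0) (hw01 : w0 ≤ w1) (hw1 : w1 < 1)
    (lam : ℝ) (hlam : 0 < lam)
    (d0 : ℝ) (hd0 : d0 ∈ Icc (0 : ℝ) w0)
    (y : ℝ → ℝ) (hy : AdmissibleSource T a w0 w1 y)
    (u1 u2 : ℝ → ℝ)
    (hc1 : ContinuousOn u1 (Icc (0 : ℝ) T)) (hc2 : ContinuousOn u2 (Icc (0 : ℝ) T))
    (hb1 : ∀ t ∈ Icc (0 : ℝ) T, u1 t ∈ Icc (0 : ℝ) w1)
    (hb2 : ∀ t ∈ Icc (0 : ℝ) T, u2 t ∈ Icc (0 : ℝ) w1) :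
    bieleckiNorm T lam (fun t => damageOp a d0 y u1 t - damageOp a d0 y u2 t) ≤
      lam⁻¹ * (a * T⁻¹ * (w1 - w0) * (1 - w1)⁻¹) *
        bieleckiNorm T lam (fun t => u1 t - u2 t) := by
  have h := damageOp_bielecki_contraction_general (a := a) (d0 := d0) hT (by linarith) hw1
    hlam hy.1.aestronglyMeasurable hy.ae_abs_le hc1 hc2 (fun t ht => (hb1 t ht).2)
    fun t ht => (hb2 t ht).2
  rwa [abs_mul_rpow_mul_mul_rpow (by linarith) (sub_pos.2 hw1), ← mul_assoc a] at h
end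

section
/- If the admissible source y is continuous on [0,T], then the solution ω of the damage integral equation with initial value d₀ ∈ [0, ω₀] is continuously differentiable on [0,T] with ω'(t) = (1 − ω(t))^{−α} y(t) for all t ∈ [0,T], and moreover 0 ≤ ω'(t) ≤ T⁻¹(ω₁ − ω₀) for all t ∈ [0,T]. -/
/-!
A solution of the damage integral equation is a fixed point of the Picard operator of the vector
field `(t, x) ↦ (1 - x) ^ (-a) * y t`. This field is continuous for `x < 1`, and `ω ≤ ω₁ < 1` keeps
the solution away from the singularity, so the fundamental theorem of calculus gives
differentiability. A continuous source satisfies its a.e. bounds at every point of `[0, T]`, and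
`(1 - ω) ^ (-a) ≤ (1 - ω₁) ^ (-a)` cancels the factor `(1 - ω₁) ^ a` in the bound on `y`.
-/

open MeasureTheory Set

/-- The right-hand side `(1 - x) ^ (-a) * y t` of the damage equation, curried as a time-dependent
vector field so that the integral equation is a Picard fixed-point equation. -/
noncomputable def damageRate (a : ℝ) (y : ℝ → ℝ) (t x : ℝ) : ℝ :=
  (1 - x) ^ (-a) * y t

theorem mapsTo_of_ae_restrict_mem {X Y : Type*} [TopologicalSpace X] [MeasurableSpace X]
    [TopologicalSpace Y] {μ : Measure X} [μ.IsOpenPosMeasure] {s : Set X} {C : Set Y} {f : X → Y}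
    (hf : ContinuousOn f s) (hs : s ⊆ closure (interior s)) (hC : IsClosed C)
    (h : ∀ᵐ x ∂μ.restrict s, f x ∈ C) : MapsTo f s C := by
  intro x hx
  have hdense : Dense {x | x ∈ s → f x ∈ C} := Measure.dense_of_ae (ae_imp_of_ae_restrict h)
  have hx_closure : x ∈ closure (interior s ∩ {x | x ∈ s → f x ∈ C}) :=
    closure_minimal (hdense.open_subset_closure_inter isOpen_interior) isClosed_closure (hs hx)
  have hcont : ContinuousWithinAt f (interior s ∩ {x | x ∈ s → f x ∈ C}) x :=
    (hf x hx).mono (inter_subset_left.trans interior_subset)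
  exact hC.closure_subset (hcont.mem_closure hx_closure fun z hz => hz.2 (interior_subset hz.1))

theorem rpow_neg_mul_mem_Icc_s7 {p q a c z : ℝ} (hp : 0 < p) (hpq : p ≤ q) (ha : 0 ≤ a)
    (hz : z ∈ Icc 0 (c * p ^ a)) : q ^ (-a) * z ∈ Icc 0 c := by
  refine ⟨mul_nonneg (Real.rpow_nonneg (hp.le.trans hpq) _) hz.1, ?_⟩
  calc q ^ (-a) * z
      ≤ p ^ (-a) * z :=
        mul_le_mul_of_nonneg_right
          (Real.rpow_le_rpow_of_nonpos hp hpq (neg_nonpos.2 ha)) hz.1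
    _ ≤ p ^ (-a) * (c * p ^ a) := mul_le_mul_of_nonneg_left hz.2 (Real.rpow_nonneg hp.le _)
    _ = c := by
        rw [mul_left_comm, ← Real.rpow_add hp, neg_add_cancel, Real.rpow_zero, mul_one]

theorem continuousOn_uncurry_damageRate {a : ℝ} {y : ℝ → ℝ} {s : Set ℝ} (hy : ContinuousOn y s) :
    ContinuousOn (Function.uncurry (damageRate a y)) (s ×ˢ Iio 1) := by
  have hpow : ContinuousOn (fun p : ℝ × ℝ => (1 - p.2) ^ (-a)) (s ×ˢ Iio 1) :=
    (continuousOn_const.sub continuousOn_snd).rpow_const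
      fun p hp => Or.inl (sub_pos.2 hp.2).ne'
  exact hpow.mul (hy.comp continuousOn_fst mapsTo_fst_prod)

theorem AdmissibleSource.mapsTo_Icc {T a w0 w1 : ℝ} {y : ℝ → ℝ} (hy : AdmissibleSource T a w0 w1 y)
    (hT : T ≠ 0) (hyc : ContinuousOn y (Icc 0 T)) :
    MapsTo y (Icc 0 T) (Icc 0 (T⁻¹ * (w1 - w0) * (1 - w1) ^ a)) :=
  mapsTo_of_ae_restrict_mem hyc (closure_interior_Icc hT.symm).ge isClosed_Icc hy.2

namespace SolvesDamage

variable {T a w1 d0 : ℝ} {y ω : ℝ → ℝ}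

theorem mapsTo_Iio_one (hω : SolvesDamage T a w1 d0 y ω) (hw1 : w1 < 1) :
    MapsTo ω (Icc 0 T) (Iio 1) :=
  fun t ht => (hω.2.1 t ht).2.trans_lt hw1

theorem eqOn_picard (hω : SolvesDamage T a w1 d0 y ω) :
    EqOn ω (ODE.picard (damageRate a y) 0 d0 ω) (Icc 0 T) :=
  hω.2.2

theorem continuousOn_damageRate (hω : SolvesDamage T a w1 d0 y ω) (hw1 : w1 < 1)
    (hyc : ContinuousOn y (Icc 0 T)) :
    ContinuousOn (fun t => damageRate a y t (ω t)) (Icc 0 T) :=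
  ODE.continuousOn_comp (continuousOn_uncurry_damageRate hyc) hω.1 (hω.mapsTo_Iio_one hw1)

theorem hasDerivWithinAt (hω : SolvesDamage T a w1 d0 y ω) (hw1 : w1 < 1)
    (hyc : ContinuousOn y (Icc 0 T)) {t : ℝ} (ht : t ∈ Icc 0 T) :
    HasDerivWithinAt ω (damageRate a y t (ω t)) (Icc 0 T) t :=
  have hpicard : HasDerivWithinAt (ODE.picard (damageRate a y) 0 d0 ω)
      (damageRate a y t (ω t)) (Icc 0 T) t :=
    ODE.hasDerivWithinAt_picard_Icc (left_mem_Icc.2 (ht.1.trans ht.2))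
      (continuousOn_uncurry_damageRate hyc) hω.1 (hω.mapsTo_Iio_one hw1) d0 ht
  hpicard.congr_of_mem hω.eqOn_picard ht

theorem damageRate_mem_Icc (hω : SolvesDamage T a w1 d0 y ω) (hw1 : w1 < 1) (ha : 0 ≤ a)
    {c t : ℝ} (ht : t ∈ Icc 0 T) (hyt : y t ∈ Icc 0 (c * (1 - w1) ^ a)) :
    damageRate a y t (ω t) ∈ Icc 0 c :=
  rpow_neg_mul_mem_Icc_s7 (sub_pos.2 hw1) (sub_le_sub_left (hω.2.1 t ht).2 1) ha hyt

end SolvesDamage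

theorem damage_solution_continuously_differentiable_general {T a w0 w1 d0 : ℝ} {y ω : ℝ → ℝ}
    (hT : 0 < T) (ha : 0 ≤ a) (hw1 : w1 < 1) (hy : AdmissibleSource T a w0 w1 y)
    (hyc : ContinuousOn y (Icc (0 : ℝ) T)) (hω : SolvesDamage T a w1 d0 y ω) :
    (∀ t ∈ Icc (0 : ℝ) T,
        HasDerivWithinAt ω ((1 - ω t) ^ (-a) * y t) (Icc (0 : ℝ) T) t) ∧
    ContinuousOn (fun t => (1 - ω t) ^ (-a) * y t) (Icc (0 : ℝ) T) ∧
    ∀ t ∈ Icc (0 : ℝ) T,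
      0 ≤ (1 - ω t) ^ (-a) * y t ∧ (1 - ω t) ^ (-a) * y t ≤ T⁻¹ * (w1 - w0) :=
  ⟨fun _ ht => hω.hasDerivWithinAt hw1 hyc ht, hω.continuousOn_damageRate hw1 hyc,
    fun _ ht => hω.damageRate_mem_Icc hw1 ha ht (hy.mapsTo_Icc hT.ne' hyc ht)⟩

/-- If the admissible source `y` is continuous, the solution of the damage
integral equation is continuously differentiable with
`ω'(t) = (1 − ω(t))^(−α) y(t)`, and `0 ≤ ω'(t) ≤ T⁻¹(ω₁ − ω₀)`. -/
theorem damage_solution_continuously_differentiable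
    (T a w0 w1 : ℝ) (hT : 0 < T) (ha : 1 ≤ a)
    (hw0 : 0 ≤ w0) (hw01 : w0 ≤ w1) (hw1 : w1 < 1)
    (d0 : ℝ) (hd0 : d0 ∈ Icc (0 : ℝ) w0)
    (y : ℝ → ℝ) (hy : AdmissibleSource T a w0 w1 y)
    (hyc : ContinuousOn y (Icc (0 : ℝ) T))
    (ω : ℝ → ℝ) (hω : SolvesDamage T a w1 d0 y ω) :
    (∀ t ∈ Icc (0 : ℝ) T,
        HasDerivWithinAt ω ((1 - ω t) ^ (-a) * y t) (Icc (0 : ℝ) T) t) ∧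
    ContinuousOn (fun t => (1 - ω t) ^ (-a) * y t) (Icc (0 : ℝ) T) ∧
    ∀ t ∈ Icc (0 : ℝ) T,
      0 ≤ (1 - ω t) ^ (-a) * y t ∧ (1 - ω t) ^ (-a) * y t ≤ T⁻¹ * (w1 - w0) := by
  exact damage_solution_continuously_differentiable_general hT (zero_le_one.trans ha) hw1 hy hyc hω
end

section
/- Fix f ∈ W and let d ∈ D and h ∈ E be such that d + h ∈ D. Set u(d) := A(d)⁻¹ f, u(d+h) := A(d+h)⁻¹ f and w_h := A(d)⁻¹( B(h)(u(d)) ). Then the identity u(d+h) − u(d) = A(d+h)⁻¹( B(h)(u(d)) ) holds, and the first-order Taylor remainder satisfies the quadratic estimate ‖u(d+h) − u(d) − w_h‖_V ≤ M³ · ‖B‖² · ‖h‖_E² · ‖f‖_W. In particular, on the interior of D the map d ↦ A(d)⁻¹ f is Fréchet differentiable with derivative h ↦ A(d)⁻¹( B(h)( A(d)⁻¹ f ) ). -/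
/-!
If `R` is a left inverse of `T'` and `S` is a right inverse of `T`, then
`R - S = R (T - T') S`. Using this identity to replace the outer `R` gives
`R - S = S (T - T') S + R (T - T') S (T - T') S`, whose last term is quadratic in `T - T'`.
The same identity bounds `‖R‖` by `2‖S‖` once `‖T - T'‖ ‖S‖ ≤ 1 / 2`, so inverses of a
differentiable family of operators stay bounded and the quadratic term is negligible.
-/

open Asymptotics Filter Topology
open ContinuousLinearMap (precomp postcomp)

section Algebra

variable {K V W : Type*} [Ring K]
  [AddCommGroup V] [TopologicalSpace V] [IsTopologicalAddGroup V] [Module K V]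
  [AddCommGroup W] [TopologicalSpace W] [IsTopologicalAddGroup W] [Module K W]
  {T T' : V →L[K] W} {R S : W →L[K] V}

theorem leftInverse_sub_rightInverse (hR : R ∘L T' = .id K V) (hS : T ∘L S = .id K W) :
    R - S = R ∘L (T - T') ∘L S := by
  rw [ContinuousLinearMap.sub_comp, ContinuousLinearMap.comp_sub, hS,
    ← ContinuousLinearMap.comp_assoc, hR, ContinuousLinearMap.comp_id,
    ContinuousLinearMap.id_comp]

theorem leftInverse_sub_rightInverse_sub_comp (hR : R ∘L T' = .id K V)
    (hS : T ∘L S = .id K W) :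
    R - S - S ∘L (T - T') ∘L S = R ∘L (T - T') ∘L S ∘L (T - T') ∘L S :=
  calc R - S - S ∘L (T - T') ∘L S
      = (R - S) ∘L (T - T') ∘L S := by
        rw [ContinuousLinearMap.sub_comp R S, leftInverse_sub_rightInverse hR hS]
    _ = R ∘L (T - T') ∘L S ∘L (T - T') ∘L S := by
        rw [leftInverse_sub_rightInverse hR hS]
        simp only [ContinuousLinearMap.comp_assoc]

end Algebra

section Norm

variable {𝕜 V W : Type*} [NontriviallyNormedField 𝕜]
  [SeminormedAddCommGroup V] [NormedSpace 𝕜 V] [SeminormedAddCommGroup W] [NormedSpace 𝕜 W]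
  {T T' : V →L[𝕜] W} {R S : W →L[𝕜] V}

theorem norm_leftInverse_sub_rightInverse_sub_comp_le (hR : R ∘L T' = .id 𝕜 V)
    (hS : T ∘L S = .id 𝕜 W) :
    ‖R - S - S ∘L (T - T') ∘L S‖ ≤ ‖R‖ * ‖S‖ ^ 2 * ‖T - T'‖ ^ 2 := by
  rw [leftInverse_sub_rightInverse_sub_comp hR hS]
  calc ‖R ∘L (T - T') ∘L S ∘L (T - T') ∘L S‖
      ≤ ‖R‖ * (‖T - T'‖ * (‖S‖ * (‖T - T'‖ * ‖S‖))) := by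
        refine (R.opNorm_comp_le _).trans ?_
        gcongr
        refine ((T - T').opNorm_comp_le _).trans ?_
        gcongr
        refine (S.opNorm_comp_le _).trans ?_
        gcongr
        exact (T - T').opNorm_comp_le S
    _ = ‖R‖ * ‖S‖ ^ 2 * ‖T - T'‖ ^ 2 := by ring

theorem norm_leftInverse_le_two_mul_norm_rightInverse (hR : R ∘L T' = .id 𝕜 V)
    (hS : T ∘L S = .id 𝕜 W) (hT : ‖T - T'‖ * ‖S‖ ≤ 1 / 2) : ‖R‖ ≤ 2 * ‖S‖ := by
  have h_sub : ‖R - S‖ ≤ ‖R‖ * (1 / 2) := by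
    rw [leftInverse_sub_rightInverse hR hS]
    calc ‖R ∘L (T - T') ∘L S‖
        ≤ ‖R‖ * ‖(T - T') ∘L S‖ := R.opNorm_comp_le _
      _ ≤ ‖R‖ * (1 / 2) := by
        gcongr
        exact ((T - T').opNorm_comp_le S).trans hT
  linarith [norm_le_norm_add_norm_sub' R S]

variable {X : Type*} {l : Filter X} {A : X → V →L[𝕜] W} {Ainv : X → W →L[𝕜] V}

theorem isBigO_one_of_eventually_leftInverse (hA : Tendsto A l (𝓝 T))
    (hAinv : ∀ᶠ y in l, Ainv y ∘L A y = .id 𝕜 V) (hS : T ∘L S = .id 𝕜 W) :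
    Ainv =O[l] fun _ => (1 : ℝ) := by
  have h_tendsto : Tendsto (fun y => ‖T - A y‖ * ‖S‖) l (𝓝 0) := by
    simpa [norm_sub_rev T] using (tendsto_iff_norm_sub_tendsto_zero.1 hA).mul_const ‖S‖
  refine .of_bound (2 * ‖S‖) ?_
  filter_upwards [hAinv, h_tendsto.eventually_le_const one_half_pos] with y hy hAy
  simpa using norm_leftInverse_le_two_mul_norm_rightInverse hy hS hAy

theorem isBigO_leftInverse_sub_rightInverse_sub_comp (hA : Tendsto A l (𝓝 T))
    (hAinv : ∀ᶠ y in l, Ainv y ∘L A y = .id 𝕜 V) (hS : T ∘L S = .id 𝕜 W) :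
    (fun y => Ainv y - S - S ∘L (T - A y) ∘L S) =O[l] fun y => ‖A y - T‖ ^ 2 := by
  have h_bound : (fun y => Ainv y - S - S ∘L (T - A y) ∘L S)
      =O[l] fun y => ‖Ainv y‖ * ‖S‖ ^ 2 * ‖A y - T‖ ^ 2 := by
    refine .of_bound' ?_
    filter_upwards [hAinv] with y hy
    simpa [norm_sub_rev T] using norm_leftInverse_sub_rightInverse_sub_comp_le hy hS
  have h_coeff : (fun y => ‖Ainv y‖ * ‖S‖ ^ 2) =O[l] fun _ => (1 : ℝ) := by
    simpa only [mul_one] using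
      (isBigO_one_of_eventually_leftInverse hA hAinv hS).norm_left.mul
        (isBigO_const_const (‖S‖ ^ 2) one_ne_zero l)
  simpa only [one_mul] using h_bound.trans (h_coeff.mul (isBigO_refl _ l))

end Norm

section Derivative

variable {𝕜 E V W : Type*} [NontriviallyNormedField 𝕜]
  [NormedAddCommGroup E] [NormedSpace 𝕜 E]
  [NormedAddCommGroup V] [NormedSpace 𝕜 V] [NormedAddCommGroup W] [NormedSpace 𝕜 W]
  {A : E → V →L[𝕜] W} {A' : E →L[𝕜] V →L[𝕜] W} {Ainv : E → W →L[𝕜] V} {x : E}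

theorem hasFDerivAt_operator_inverse (hA : HasFDerivAt A A' x)
    (hleft : ∀ᶠ y in 𝓝 x, Ainv y ∘L A y = .id 𝕜 V) (hright : A x ∘L Ainv x = .id 𝕜 W) :
    HasFDerivAt Ainv (-(postcomp W (Ainv x) ∘L precomp W (Ainv x) ∘L A')) x := by
  have h_remainder : HasFDerivAt (fun y => Ainv y - Ainv x - Ainv x ∘L (A x - A y) ∘L Ainv x)
      (0 : E →L[𝕜] W →L[𝕜] V) x :=
    ((isBigO_leftInverse_sub_rightInverse_sub_comp hA.continuousAt hleft hright).trans
      (hA.isBigO_sub.norm_norm.pow 2)).hasFDerivAt one_lt_two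
  have h_linear : HasFDerivAt (fun y => Ainv x ∘L (A x - A y) ∘L Ainv x)
      (-(postcomp W (Ainv x) ∘L precomp W (Ainv x) ∘L A')) x := by
    have h_const := hasFDerivAt_const (𝕜 := 𝕜) (Ainv x) x
    exact (h_const.clm_comp ((hA.const_sub (A x)).clm_comp h_const)).congr_fderiv
      (by ext; simp)
  simpa using (h_remainder.add h_linear).add_const (Ainv x)

end Derivative

theorem solution_map_frechet_differentiable_general
    {𝕜 V W E : Type*} [NontriviallyNormedField 𝕜]
    [NormedAddCommGroup V] [NormedSpace 𝕜 V]
    [NormedAddCommGroup W] [NormedSpace 𝕜 W]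
    [NormedAddCommGroup E] [NormedSpace 𝕜 E]
    (A0 : V →L[𝕜] W) (B : E →L[𝕜] V →L[𝕜] W)
    (D : Set E) (M : ℝ)
    (Ainv : E → (W →L[𝕜] V))
    (hinv : ∀ d ∈ D,
      (∀ v : V, Ainv d ((A0 - B d) v) = v) ∧
      (∀ w : W, (A0 - B d) (Ainv d w) = w) ∧ ‖Ainv d‖ ≤ M)
    (f : W) (d h : E) (hd : d ∈ D) (hdh : d + h ∈ D) :
    Ainv (d + h) f - Ainv d f = Ainv (d + h) (B h (Ainv d f)) ∧
    ‖Ainv (d + h) f - Ainv d f - Ainv d (B h (Ainv d f))‖ ≤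
      M ^ 3 * ‖B‖ ^ 2 * ‖h‖ ^ 2 * ‖f‖ ∧
    ∀ d' ∈ interior D,
      HasFDerivAt (fun e : E => Ainv e f)
        ((Ainv d').comp (B.flip (Ainv d' f))) d' := by
  have hleft : ∀ e ∈ D, Ainv e ∘L (A0 - B e) = .id 𝕜 V := fun e he =>
    ContinuousLinearMap.ext (hinv e he).1
  have hright : ∀ e ∈ D, (A0 - B e) ∘L Ainv e = .id 𝕜 W := fun e he =>
    ContinuousLinearMap.ext (hinv e he).2.1
  have h_increment : A0 - B d - (A0 - B (d + h)) = B h := by simp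
  refine ⟨?_, ?_, fun d' hd' => ?_⟩
  · simpa only [h_increment] using!
      DFunLike.congr_fun (leftInverse_sub_rightInverse (hleft _ hdh) (hright d hd)) f
  · have hM : 0 ≤ M := (norm_nonneg _).trans (hinv d hd).2.2
    have h_op := norm_leftInverse_sub_rightInverse_sub_comp_le (hleft _ hdh) (hright d hd)
    rw [h_increment] at h_op
    calc ‖Ainv (d + h) f - Ainv d f - Ainv d (B h (Ainv d f))‖
        ≤ ‖Ainv (d + h)‖ * ‖Ainv d‖ ^ 2 * ‖B h‖ ^ 2 * ‖f‖ :=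
          ContinuousLinearMap.le_of_opNorm_le _ h_op f
      _ ≤ M * M ^ 2 * (‖B‖ * ‖h‖) ^ 2 * ‖f‖ := by
          gcongr
          exacts [(hinv _ hdh).2.2, (hinv d hd).2.2, B.le_opNorm h]
      _ = M ^ 3 * ‖B‖ ^ 2 * ‖h‖ ^ 2 * ‖f‖ := by ring
  · have h_deriv := hasFDerivAt_operator_inverse (B.hasFDerivAt.const_sub A0)
      (mem_of_superset (mem_interior_iff_mem_nhds.1 hd') hleft) (hright d' (interior_subset hd'))
    exact ((ContinuousLinearMap.apply 𝕜 V f).hasFDerivAt.comp d' h_deriv).congr_fderiv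
      (by ext; simp)

/-- Fréchet differentiability of the solution of the parametrized operator
equation `A(d) u = f`, where `A(d) = A₀ − B(d)`:
identity for the increment, quadratic Taylor remainder estimate, and
differentiability on the interior of `D` with derivative
`h ↦ A(d)⁻¹ (B(h) (A(d)⁻¹ f))`. -/
theorem solution_map_frechet_differentiable
    {V W E : Type*}
    [NormedAddCommGroup V] [NormedSpace ℝ V] [CompleteSpace V]
    [NormedAddCommGroup W] [NormedSpace ℝ W] [CompleteSpace W]
    [NormedAddCommGroup E] [NormedSpace ℝ E]
    (A0 : V →L[ℝ] W) (B : E →L[ℝ] V →L[ℝ] W)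
    (D : Set E) (M : ℝ) (hM : 0 < M)
    (Ainv : E → (W →L[ℝ] V))
    (hinv : ∀ d ∈ D,
      (∀ v : V, Ainv d ((A0 - B d) v) = v) ∧
      (∀ w : W, (A0 - B d) (Ainv d w) = w) ∧ ‖Ainv d‖ ≤ M)
    (f : W) (d h : E) (hd : d ∈ D) (hdh : d + h ∈ D) :
    Ainv (d + h) f - Ainv d f = Ainv (d + h) (B h (Ainv d f)) ∧
    ‖Ainv (d + h) f - Ainv d f - Ainv d (B h (Ainv d f))‖ ≤
      M ^ 3 * ‖B‖ ^ 2 * ‖h‖ ^ 2 * ‖f‖ ∧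
    ∀ d' ∈ interior D,
      HasFDerivAt (fun e : E => Ainv e f)
        ((Ainv d').comp (B.flip (Ainv d' f))) d' :=
  solution_map_frechet_differentiable_general A0 B D M Ainv hinv f d h hd hdh
end

section
/- Let X be an infinite-dimensional real Hilbert space, Y and Z real normed spaces, ι : X → Y a compact linear operator, and Φ : Y → Z a Lipschitz continuous map. Then the problem of recovering g from Φ(ι(g)) is locally ill-posed at every point: for every g ∈ X and every r > 0 there exists a sequence (g_n)_{n∈ℕ} in X with ‖g_n − g‖_X = r for every n (so that in particular g_n does not converge to g in X) while ‖Φ(ι(g_n)) − Φ(ι(g))‖_Z → 0 as n → ∞. -/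
/-!
By Riesz's lemma an infinite-dimensional space contains a bounded sequence whose terms are at mutual
distance at least `1`. A compact operator maps a subsequence of it to a convergent sequence, so it
sends the differences of consecutive terms, whose norms are at least `1`, to a null sequence.
Rescaling these differences to norm `r` and adding them to `g` gives the required sequence.
-/

open Filter

section CompactOperator

open Topology

variable {E : Type*} [NormedAddCommGroup E]

theorem exists_seq_one_le_norm_tendsto_zero_of_isCompactOperator
    {𝕜 F : Type*} [NontriviallyNormedField 𝕜] [CompleteSpace 𝕜] [NormedSpace 𝕜 E]
    [AddCommGroup F] [TopologicalSpace F] [IsTopologicalAddGroup F] [FirstCountableTopology F]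
    [Module 𝕜 F] [ContinuousConstSMul 𝕜 F]
    (hE : ¬ FiniteDimensional 𝕜 E) {T : E →ₗ[𝕜] F} (hT : IsCompactOperator T) :
    ∃ x : ℕ → E, (∀ n, 1 ≤ ‖x n‖) ∧ Tendsto (fun n => T (x n)) atTop (𝓝 0) := by
  obtain ⟨R, e, -, he_bdd, he_sep⟩ := exists_seq_norm_le_one_le_norm_sub hE
  obtain ⟨K, hK, he_image⟩ := hT.image_closedBall_subset_compact R
  have he_mem (n : ℕ) : T (e n) ∈ K :=
    he_image ⟨e n, mem_closedBall_zero_iff.mpr (he_bdd n), rfl⟩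
  obtain ⟨y, -, φ, hφ, hlim⟩ := hK.tendsto_subseq he_mem
  refine ⟨fun n => e (φ (n + 1)) - e (φ n), fun n => he_sep (hφ n.lt_succ_self).ne', ?_⟩
  simpa only [map_sub, sub_self, Function.comp_apply] using
    (hlim.comp (tendsto_add_atTop_nat 1)).sub hlim

variable {𝕜 F : Type*} [RCLike 𝕜] [NormedSpace 𝕜 E] [SeminormedAddCommGroup F] [NormedSpace 𝕜 F]

theorem exists_seq_norm_eq_one_tendsto_zero_of_isCompactOperator
    (hE : ¬ FiniteDimensional 𝕜 E) {T : E →ₗ[𝕜] F} (hT : IsCompactOperator T) :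
    ∃ u : ℕ → E, (∀ n, ‖u n‖ = 1) ∧ Tendsto (fun n => T (u n)) atTop (𝓝 0) := by
  obtain ⟨x, hx, hTx⟩ := exists_seq_one_le_norm_tendsto_zero_of_isCompactOperator hE hT
  have hx_ne (n : ℕ) : x n ≠ 0 := norm_pos_iff.mp (one_pos.trans_le (hx n))
  refine ⟨fun n => (‖x n‖⁻¹ : 𝕜) • x n, fun n => norm_smul_inv_norm (hx_ne n),
    squeeze_zero_norm (fun n => ?_) (tendsto_zero_iff_norm_tendsto_zero.mp hTx)⟩
  calc ‖T ((‖x n‖⁻¹ : 𝕜) • x n)‖ = ‖x n‖⁻¹ * ‖T (x n)‖ := by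
        rw [map_smul, norm_smul, norm_inv, RCLike.norm_coe_norm]
    _ ≤ ‖T (x n)‖ := mul_le_of_le_one_left (norm_nonneg _) (inv_le_one_of_one_le₀ (hx n))

theorem compact_composition_locally_ill_posed_general {Z : Type*} [TopologicalSpace Z]
    (hE : ¬ FiniteDimensional 𝕜 E) {T : E →ₗ[𝕜] F} (hT : IsCompactOperator T)
    {Φ : F → Z} {g : E} (hΦ : ContinuousAt Φ (T g)) {r : ℝ} (hr : 0 ≤ r) :
    ∃ gs : ℕ → E, (∀ n, ‖gs n - g‖ = r) ∧
      Tendsto (fun n => Φ (T (gs n))) atTop (𝓝 (Φ (T g))) := by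
  obtain ⟨u, hu, hTu⟩ := exists_seq_norm_eq_one_tendsto_zero_of_isCompactOperator hE hT
  refine ⟨fun n => g + (r : 𝕜) • u n, fun n => ?_, hΦ.tendsto.comp ?_⟩
  · rw [add_sub_cancel_left, norm_smul, RCLike.norm_of_nonneg hr, hu, mul_one]
  · simpa only [map_add, map_smul, smul_zero, add_zero] using
      (hTu.const_smul (r : 𝕜)).const_add (T g)

end CompactOperator

/-- Local ill-posedness at every point: if `X` is an infinite-dimensional real
Hilbert space, `ι : X → Y` a compact linear operator and `Φ : Y → Z` Lipschitz,
then for every `g` and `r > 0` there is a sequence at distance exactly `r` from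
`g` whose images under `Φ ∘ ι` converge to the image of `g`. -/
theorem compact_composition_locally_ill_posed
    {X Y Z : Type*}
    [NormedAddCommGroup X] [InnerProductSpace ℝ X] [CompleteSpace X]
    [NormedAddCommGroup Y] [NormedSpace ℝ Y]
    [NormedAddCommGroup Z] [NormedSpace ℝ Z]
    (hX : ¬ FiniteDimensional ℝ X)
    (ι : X →L[ℝ] Y)
    (hι : ∀ s : Set X, Bornology.IsBounded s → IsCompact (closure (ι '' s)))
    (Φ : Y → Z) (L : NNReal) (hΦ : LipschitzWith L Φ)
    (g : X) (r : ℝ) (hr : 0 < r) :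
    ∃ gs : ℕ → X, (∀ n, ‖gs n - g‖ = r) ∧
      Tendsto (fun n => ‖Φ (ι (gs n)) - Φ (ι g)‖) atTop (nhds 0) := by
  have hι_compact : IsCompactOperator (ι : X →ₗ[ℝ] Y) :=
    (isCompactOperator_iff_isCompact_closure_image_closedBall _ one_pos).mpr
      (hι _ Metric.isBounded_closedBall)
  obtain ⟨gs, hgs, hlim⟩ :=
    compact_composition_locally_ill_posed_general hX hι_compact hΦ.continuous.continuousAt hr.le
  exact ⟨gs, hgs, tendsto_iff_norm_sub_tendsto_zero.mp hlim⟩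
end
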